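/- arXiv:2506.19003 — 10 statements merged into one kernel-verified Lean document; each statement's English description precedes it below -/
import Mathlib

section
/- For the phase-space ODE system, the function N(t) = √(1 + x(t)² + y(t)²) is differentiable with N'(t) = ε(t)·y(t) for every t. Consequently, if ε(t) ≥ 0 for all t and y(t) ≤ 0 for all t in an interval [a,b] with a ≤ b, then N(b) ≤ N(a) (the squeezing parameter cannot increase while the trajectory is in the lower half-plane). -/
/-!
Put `N = √(1 + x² + y²)`, so that `N N' = x x' + y y'`. The terms of rate `2ω - ε` rotate the plane
and are orthogonal to `(x, y)`, so they cancel; the driving term `ε N` in `y'` leaves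
`N N' = ε N y`, and dividing by `N > 0` gives `N' = ε y`.
-/

section PlaneCurve

variable {x y : ℝ → ℝ} {s : Set ℝ} {t c : ℝ}

theorem hasDerivWithinAt_sqrt_add_sq_add_sq {x' y' : ℝ}
    (hx : HasDerivWithinAt x x' s t) (hy : HasDerivWithinAt y y' s t)
    (hne : c + x t ^ 2 + y t ^ 2 ≠ 0) :
    HasDerivWithinAt (fun τ => √(c + x τ ^ 2 + y τ ^ 2))
      ((x t * x' + y t * y') / √(c + x t ^ 2 + y t ^ 2)) s t := by
  have hsq : HasDerivWithinAt (fun τ => c + x τ ^ 2 + y τ ^ 2)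
      (2 * (x t * x' + y t * y')) s t :=
    (((hx.fun_pow 2).const_add c).fun_add (hy.fun_pow 2)).congr_deriv (by push_cast; ring)
  exact (hsq.sqrt hne).congr_deriv (mul_div_mul_left _ _ two_ne_zero)

theorem hasDerivWithinAt_sqrt_of_driven_rotation {Ω ε : ℝ}
    (hx : HasDerivWithinAt x (-Ω * y t) s t)
    (hy : HasDerivWithinAt y (Ω * x t + ε * √(c + x t ^ 2 + y t ^ 2)) s t)
    (hpos : 0 < c + x t ^ 2 + y t ^ 2) :
    HasDerivWithinAt (fun τ => √(c + x τ ^ 2 + y τ ^ 2)) (ε * y t) s t := by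
  have hN : √(c + x t ^ 2 + y t ^ 2) ≠ 0 := (Real.sqrt_pos.mpr hpos).ne'
  refine (hasDerivWithinAt_sqrt_add_sq_add_sq hx hy hpos.ne').congr_deriv ?_
  rw [div_eq_iff hN]
  ring

theorem cosh_nonincreasing_in_lower_half_plane_general {Ω ε : ℝ → ℝ} (hc : 0 < c)
    (hx : ∀ t ∈ s, HasDerivWithinAt x (-Ω t * y t) s t)
    (hy : ∀ t ∈ s, HasDerivWithinAt y (Ω t * x t + ε t * √(c + x t ^ 2 + y t ^ 2)) s t) :
    (∀ t ∈ s, HasDerivWithinAt (fun τ => √(c + x τ ^ 2 + y τ ^ 2)) (ε t * y t) s t) ∧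
      (Convex ℝ s → (∀ t ∈ interior s, ε t * y t ≤ 0) →
        AntitoneOn (fun t => √(c + x t ^ 2 + y t ^ 2)) s) := by
  have hderiv : ∀ t ∈ s,
      HasDerivWithinAt (fun τ => √(c + x τ ^ 2 + y τ ^ 2)) (ε t * y t) s t := fun t ht =>
    hasDerivWithinAt_sqrt_of_driven_rotation (hx t ht) (hy t ht) (by positivity)
  refine ⟨hderiv, fun hs hnonpos => ?_⟩
  exact antitoneOn_of_hasDerivWithinAt_nonpos hs
    (fun t ht => (hderiv t ht).continuousWithinAt)
    (fun t ht => (hderiv t (interior_subset ht)).mono interior_subset) hnonpos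

end PlaneCurve

/-- For the phase-space ODE system, `N(t) = √(1 + x(t)² + y(t)²)` is
differentiable with `N'(t) = ε(t)·y(t)`; consequently, if `ε ≥ 0` everywhere and
`y ≤ 0` on `[a,b]` with `a ≤ b`, then `N(b) ≤ N(a)`. -/
theorem cosh_nonincreasing_in_lower_half_plane
    (ω : ℝ) (hω : 0 < ω) (ε x y : ℝ → ℝ) (hε : Continuous ε)
    (hx : ∀ t, HasDerivAt x (-(2 * ω - ε t) * y t) t)
    (hy : ∀ t, HasDerivAt y ((2 * ω - ε t) * x t
      + ε t * Real.sqrt (1 + (x t) ^ 2 + (y t) ^ 2)) t) :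
    (∀ t, HasDerivAt (fun s => Real.sqrt (1 + (x s) ^ 2 + (y s) ^ 2)) (ε t * y t) t)
    ∧ (∀ a b : ℝ, a ≤ b → (∀ t, 0 ≤ ε t) → (∀ t ∈ Set.Icc a b, y t ≤ 0) →
        Real.sqrt (1 + (x b) ^ 2 + (y b) ^ 2) ≤ Real.sqrt (1 + (x a) ^ 2 + (y a) ^ 2)) := by
  have hgen (s : Set ℝ) := cosh_nonincreasing_in_lower_half_plane_general (s := s)
    (Ω := fun t => 2 * ω - ε t) one_pos
    (fun t _ => (hx t).hasDerivWithinAt) (fun t _ => (hy t).hasDerivWithinAt)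
  exact ⟨fun t => ((hgen Set.univ).1 t (Set.mem_univ t)).hasDerivAt Filter.univ_mem,
    fun a b hab hε_nonneg hy_nonpos => (hgen (Set.Icc a b)).2 (convex_Icc a b)
      (fun t ht => mul_nonpos_of_nonneg_of_nonpos (hε_nonneg t) (hy_nonpos t (interior_subset ht)))
      (Set.left_mem_Icc.mpr hab) (Set.right_mem_Icc.mpr hab) hab⟩
end

section
/- For the phase-space ODE system, the function M(t) = x(t) + √(1 + x(t)² + y(t)²) is differentiable with M'(t) = −2(ω − ε(t))·y(t) for every t. Consequently, if ε(t) ≤ ω for all t and y(t) ≥ 0 for all t in an interval [a,b] with a ≤ b, then M(b) ≤ M(a). -/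
/-!
The field `(x, y)` is a rotation at rate `2ω - ε` plus a drift `ε √(1 + x² + y²)` along `y`.
The rotation preserves `√(1 + x² + y²) = cosh 2r`, so only the drift changes it, and the
normalisation of the drift makes this change exactly `ε y`. Adding `x' = -(2ω - ε) y` gives
`M' = -2 (ω - ε) y`, which is nonpositive wherever `ε ≤ ω` and `0 ≤ y`.
-/

section

variable {x y : ℝ → ℝ} {s : Set ℝ} {t : ℝ}

theorem hasDerivWithinAt_sqrt_one_add_sq_add_sq {x' y' : ℝ}
    (hx : HasDerivWithinAt x x' s t) (hy : HasDerivWithinAt y y' s t) :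
    HasDerivWithinAt (fun τ => √(1 + x τ ^ 2 + y τ ^ 2))
      ((x t * x' + y t * y') / √(1 + x t ^ 2 + y t ^ 2)) s t := by
  have hne : 1 + x t ^ 2 + y t ^ 2 ≠ 0 := by positivity
  refine ((((hx.fun_pow 2).const_add 1).fun_add (hy.fun_pow 2)).sqrt hne).congr_deriv ?_
  rw [← mul_div_mul_left _ _ (two_ne_zero' ℝ)]
  ring

theorem hasDerivWithinAt_sqrt_one_add_sq_add_sq_of_rotation_add_drift {ρ κ : ℝ}
    (hx : HasDerivWithinAt x (-ρ * y t) s t)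
    (hy : HasDerivWithinAt y (ρ * x t + κ * √(1 + x t ^ 2 + y t ^ 2)) s t) :
    HasDerivWithinAt (fun τ => √(1 + x τ ^ 2 + y τ ^ 2)) (κ * y t) s t := by
  have hne : √(1 + x t ^ 2 + y t ^ 2) ≠ 0 := by positivity
  refine (hasDerivWithinAt_sqrt_one_add_sq_add_sq hx hy).congr_deriv ?_
  rw [div_eq_iff hne]
  ring

end

theorem M_nonincreasing_in_upper_half_plane_general
    {ω ε x y : ℝ → ℝ} {s : Set ℝ}
    (hx : ∀ t ∈ s, HasDerivWithinAt x (-(2 * ω t - ε t) * y t) s t)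
    (hy : ∀ t ∈ s, HasDerivWithinAt y
      ((2 * ω t - ε t) * x t + ε t * √(1 + x t ^ 2 + y t ^ 2)) s t) :
    (∀ t ∈ s, HasDerivWithinAt (fun τ => x τ + √(1 + x τ ^ 2 + y τ ^ 2))
        (-2 * (ω t - ε t) * y t) s t)
    ∧ ∀ I ⊆ s, Convex ℝ I → (∀ t ∈ interior I, ε t ≤ ω t) → (∀ t ∈ interior I, 0 ≤ y t) →
        AntitoneOn (fun τ => x τ + √(1 + x τ ^ 2 + y τ ^ 2)) I := by
  have hM : ∀ t ∈ s, HasDerivWithinAt (fun τ => x τ + √(1 + x τ ^ 2 + y τ ^ 2))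
      (-2 * (ω t - ε t) * y t) s t := fun t ht =>
    ((hx t ht).fun_add (hasDerivWithinAt_sqrt_one_add_sq_add_sq_of_rotation_add_drift
      (hx t ht) (hy t ht))).congr_deriv (by ring)
  refine ⟨hM, fun I hIs hI hεω hy_nonneg => ?_⟩
  have hM_cont : ContinuousOn (fun τ => x τ + √(1 + x τ ^ 2 + y τ ^ 2)) I :=
    fun t ht => (hM t (hIs ht)).continuousWithinAt.mono hIs
  have hM'_nonpos : ∀ t ∈ interior I, -2 * (ω t - ε t) * y t ≤ 0 := fun t ht =>
    mul_nonpos_of_nonpos_of_nonneg (by linarith [hεω t ht]) (hy_nonneg t ht)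
  exact antitoneOn_of_hasDerivWithinAt_nonpos hI hM_cont
    (fun t ht => (hM t (hIs (interior_subset ht))).mono (interior_subset.trans hIs)) hM'_nonpos

/-- For the phase-space ODE system, `M(t) = x(t) + √(1 + x(t)² + y(t)²)` is
differentiable with `M'(t) = −2(ω − ε(t))·y(t)`; consequently, if `ε(t) ≤ ω` for all `t`
and `y ≥ 0` on `[a,b]` with `a ≤ b`, then `M(b) ≤ M(a)`. -/
theorem M_nonincreasing_in_upper_half_plane
    (ω : ℝ) (hω : 0 < ω) (ε x y : ℝ → ℝ) (hε : Continuous ε)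
    (hx : ∀ t, HasDerivAt x (-(2 * ω - ε t) * y t) t)
    (hy : ∀ t, HasDerivAt y ((2 * ω - ε t) * x t
      + ε t * Real.sqrt (1 + (x t) ^ 2 + (y t) ^ 2)) t) :
    (∀ t, HasDerivAt (fun s => x s + Real.sqrt (1 + (x s) ^ 2 + (y s) ^ 2))
        (-2 * (ω - ε t) * y t) t)
    ∧ (∀ a b : ℝ, a ≤ b → (∀ t, ε t ≤ ω) → (∀ t ∈ Set.Icc a b, 0 ≤ y t) →
        x b + Real.sqrt (1 + (x b) ^ 2 + (y b) ^ 2)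
          ≤ x a + Real.sqrt (1 + (x a) ^ 2 + (y a) ^ 2)) := by
  obtain ⟨hM, hanti⟩ := M_nonincreasing_in_upper_half_plane_general
    (s := Set.univ) (ω := fun _ => ω)
    (fun t _ => (hx t).hasDerivWithinAt) (fun t _ => (hy t).hasDerivWithinAt)
  exact ⟨fun t => (hM t trivial).hasDerivAt Filter.univ_mem, fun a b hab hεω hy_nonneg =>
    hanti (Set.Icc a b) (Set.subset_univ _) (convex_Icc a b) (fun t _ => hεω t)
      (fun t ht => hy_nonneg t (interior_subset ht))
      (Set.left_mem_Icc.mpr hab) (Set.right_mem_Icc.mpr hab) hab⟩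
end

section
/- For the phase-space ODE system with admissible control (0 ≤ ε(t) ≤ ω for all t): if y(t₀) = 0 and y(t) ≥ 0 for all t ∈ [t₀, t₀ + δ] for some δ ≥ 0, then y(t₀ + δ) ≤ ω·δ·(x(t₀) + √(1 + x(t₀)²)). -/
/-!
Along the flow, the momentum variance `v = x + √(1 + x² + y²)` satisfies `v' = -2 (ω - ε) y`, as the
control only changes the restoring force, from `ω` to `ω - ε`. It is therefore nonincreasing while
`y ≥ 0` and `ε ≤ ω`. On the other hand `y'` is an affine function of `ε`, equal to `ω v` at `ε = ω`
and nondecreasing because `x ≤ √(1 + x² + y²)`, so `y' ≤ ω v ≤ ω v(t₀)`.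
-/

/-- The variance of the quadrature `i (a† - a)` in the squeezed vacuum state with phase-space
coordinates `x = sinh (2r) cos φ` and `y = sinh (2r) sin φ`, that is `cosh (2r) + sinh (2r) cos φ`,
normalized to be `1` in the vacuum. It controls the growth rate of `y`. -/
noncomputable def momentumVariance (x y : ℝ) : ℝ := x + √(1 + x ^ 2 + y ^ 2)

lemma le_sqrt_one_add_sq_add_sq (x y : ℝ) : x ≤ √(1 + x ^ 2 + y ^ 2) :=
  Real.le_sqrt_of_sq_le (by linarith [sq_nonneg y])

lemma rate_le_mul_momentumVariance {ω ε : ℝ} (hε : ε ≤ ω) (x y : ℝ) :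
    (2 * ω - ε) * x + ε * √(1 + x ^ 2 + y ^ 2) ≤ ω * momentumVariance x y := by
  have gap_nonneg : 0 ≤ (ω - ε) * (√(1 + x ^ 2 + y ^ 2) - x) :=
    mul_nonneg (sub_nonneg.2 hε) (sub_nonneg.2 (le_sqrt_one_add_sq_add_sq x y))
  unfold momentumVariance
  linarith

lemma hasDerivWithinAt_momentumVariance {x y : ℝ → ℝ} {s : Set ℝ} {t ω ε : ℝ}
    (hx : HasDerivWithinAt x (-(2 * ω - ε) * y t) s t)
    (hy : HasDerivWithinAt y ((2 * ω - ε) * x t + ε * √(1 + x t ^ 2 + y t ^ 2)) s t) :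
    HasDerivWithinAt (fun τ ↦ momentumVariance (x τ) (y τ)) (-2 * (ω - ε) * y t) s t := by
  have radicand_pos : 0 < 1 + x t ^ 2 + y t ^ 2 := by positivity
  have hsqrt : HasDerivWithinAt (fun τ ↦ √(1 + x τ ^ 2 + y τ ^ 2)) (ε * y t) s t := by
    refine ((((hx.fun_pow 2).const_add 1).fun_add (hy.fun_pow 2)).sqrt
      radicand_pos.ne').congr_deriv ?_
    field_simp
    ring
  exact (hx.fun_add hsqrt).congr_deriv (by ring)

lemma antitoneOn_momentumVariance {ω : ℝ} {ε x y : ℝ → ℝ} {D : Set ℝ} (hD : Convex ℝ D)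
    (hε : ∀ t ∈ D, ε t ≤ ω)
    (hx : ∀ t ∈ D, HasDerivWithinAt x (-(2 * ω - ε t) * y t) D t)
    (hy : ∀ t ∈ D, HasDerivWithinAt y
      ((2 * ω - ε t) * x t + ε t * √(1 + x t ^ 2 + y t ^ 2)) D t)
    (y_nonneg : ∀ t ∈ D, 0 ≤ y t) :
    AntitoneOn (fun t ↦ momentumVariance (x t) (y t)) D := by
  have hderiv := fun t ht ↦ hasDerivWithinAt_momentumVariance (hx t ht) (hy t ht)
  refine antitoneOn_of_hasDerivWithinAt_nonpos hD (fun t ht ↦ (hderiv t ht).continuousWithinAt)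
    (fun t ht ↦ (hderiv t (interior_subset ht)).mono interior_subset) fun t ht ↦ ?_
  have ht' := interior_subset ht
  have decay_nonneg : 0 ≤ (ω - ε t) * y t :=
    mul_nonneg (sub_nonneg.2 (hε t ht')) (y_nonneg t ht')
  linarith

theorem y_linear_growth_bound_general {ω : ℝ} (hω : 0 ≤ ω) {ε x y : ℝ → ℝ} {t₀ t₁ : ℝ}
    (h01 : t₀ ≤ t₁) (hε : ∀ t ∈ Set.Icc t₀ t₁, ε t ≤ ω)
    (hx : ∀ t ∈ Set.Icc t₀ t₁, HasDerivWithinAt x (-(2 * ω - ε t) * y t) (Set.Icc t₀ t₁) t)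
    (hy : ∀ t ∈ Set.Icc t₀ t₁, HasDerivWithinAt y
      ((2 * ω - ε t) * x t + ε t * √(1 + x t ^ 2 + y t ^ 2)) (Set.Icc t₀ t₁) t)
    (y_nonneg : ∀ t ∈ Set.Icc t₀ t₁, 0 ≤ y t) :
    y t₁ - y t₀ ≤ ω * (t₁ - t₀) * (x t₀ + √(1 + x t₀ ^ 2 + y t₀ ^ 2)) := by
  have ht₀ := Set.left_mem_Icc.2 h01
  have hanti := antitoneOn_momentumVariance (convex_Icc t₀ t₁) hε hx hy y_nonneg
  have deriv_y_le : ∀ t ∈ interior (Set.Icc t₀ t₁),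
      deriv y t ≤ ω * momentumVariance (x t₀) (y t₀) := by
    intro t ht
    have ht' := interior_subset ht
    calc
      deriv y t = (2 * ω - ε t) * x t + ε t * √(1 + x t ^ 2 + y t ^ 2) :=
        ((hy t ht').hasDerivAt (mem_interior_iff_mem_nhds.1 ht)).deriv
      _ ≤ ω * momentumVariance (x t) (y t) := rate_le_mul_momentumVariance (hε t ht') _ _
      _ ≤ ω * momentumVariance (x t₀) (y t₀) :=
        mul_le_mul_of_nonneg_left (hanti ht₀ ht' ht'.1) hω
  have hy_diff : DifferentiableOn ℝ y (Set.Icc t₀ t₁) :=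
    fun t ht ↦ (hy t ht).differentiableWithinAt
  calc
    y t₁ - y t₀ ≤ ω * momentumVariance (x t₀) (y t₀) * (t₁ - t₀) :=
      (convex_Icc t₀ t₁).image_sub_le_mul_sub_of_deriv_le hy_diff.continuousOn
        (hy_diff.mono interior_subset) deriv_y_le t₀ ht₀ t₁ (Set.right_mem_Icc.2 h01) h01
    _ = ω * (t₁ - t₀) * (x t₀ + √(1 + x t₀ ^ 2 + y t₀ ^ 2)) := mul_right_comm _ _ _

/-- For the phase-space ODE system with admissible control
(`0 ≤ ε(t) ≤ ω` for all `t`): if `y(t₀) = 0` and `y(t) ≥ 0` for all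
`t ∈ [t₀, t₀ + δ]` with `δ ≥ 0`, then `y(t₀ + δ) ≤ ω·δ·(x(t₀) + √(1 + x(t₀)²))`. -/
theorem y_linear_growth_bound
    (ω : ℝ) (hω : 0 < ω) (ε x y : ℝ → ℝ) (hε : Continuous ε)
    (hadm : ∀ t, 0 ≤ ε t ∧ ε t ≤ ω)
    (hx : ∀ t, HasDerivAt x (-(2 * ω - ε t) * y t) t)
    (hy : ∀ t, HasDerivAt y ((2 * ω - ε t) * x t
      + ε t * Real.sqrt (1 + (x t) ^ 2 + (y t) ^ 2)) t)
    (t₀ δ : ℝ) (hδ : 0 ≤ δ) (hy0 : y t₀ = 0)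
    (hynn : ∀ t ∈ Set.Icc t₀ (t₀ + δ), 0 ≤ y t) :
    y (t₀ + δ) ≤ ω * δ * (x t₀ + Real.sqrt (1 + (x t₀) ^ 2)) := by
  simpa [hy0] using y_linear_growth_bound_general hω.le (le_add_of_nonneg_right hδ)
    (fun t _ ↦ (hadm t).2) (fun t _ ↦ (hx t).hasDerivWithinAt)
    (fun t _ ↦ (hy t).hasDerivWithinAt) hynn
end

section
/- (Paper's Lemma 1, single-winding growth bound.) For the phase-space ODE system with admissible control (0 ≤ ε(t) ≤ ω for all t): suppose t₀ ≤ s ≤ t₁, y(t₀) = 0, y(t) ≥ 0 for all t ∈ [t₀, s], and y(t) ≤ 0 for all t ∈ [s, t₁] (one excursion into the upper half-plane followed by a stretch in the lower half-plane, i.e., at most one winding). Then √(1 + x(t₁)² + y(t₁)²) ≤ (1 + ω²(t₁ − t₀)²)·√(1 + x(t₀)²); equivalently, cosh(2r(t₁)) ≤ (ω²Δ² + 1)·cosh(2r(t₀)) with Δ = t₁ − t₀. -/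
/-!
The point `(x, y)` lifts to `(x, y, C)` on the hyperboloid `C² - x² - y² = 1`, where
`C = cosh 2r`, and along a trajectory `C' = ε y`. Hence `C` can only grow in the upper half-plane,
and there `(x + C)' = -2 (ω - ε) y ≤ 0` while `y' = ω (x + C) - (ω - ε) (C - x) ≤ ω (x + C)`.
Starting from height `C₀` with `y = 0`, integrating twice gives `y ≤ ω (x₀ + C₀) Δ` and then
`C ≤ C₀ + ω² (x₀ + C₀) Δ² / 2`; finally `x₀ ≤ C₀`.
-/

open Set

/-- The third coordinate of the point above `(x, y)` on the upper sheet of the hyperboloid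
`C² - x² - y² = 1`; it is `cosh 2r` for the squeezing parameter `r`. -/
noncomputable def hyperboloidHeight (x y : ℝ) : ℝ :=
  √(1 + x ^ 2 + y ^ 2)

theorem hyperboloidHeight_pos (x y : ℝ) : 0 < hyperboloidHeight x y :=
  Real.sqrt_pos.2 (by positivity)

theorem le_hyperboloidHeight (x y : ℝ) : x ≤ hyperboloidHeight x y :=
  Real.le_sqrt_of_sq_le (by linarith [sq_nonneg y])

theorem hasDerivWithinAt_hyperboloidHeight {x y : ℝ → ℝ} {x' y' t : ℝ} {S : Set ℝ}
    (hx : HasDerivWithinAt x x' S t) (hy : HasDerivWithinAt y y' S t) :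
    HasDerivWithinAt (fun r ↦ hyperboloidHeight (x r) (y r))
      ((x t * x' + y t * y') / hyperboloidHeight (x t) (y t)) S t := by
  have hpos : 1 + x t ^ 2 + y t ^ 2 ≠ 0 := by positivity
  refine ((((hx.fun_pow 2).const_add 1).fun_add (hy.fun_pow 2)).sqrt hpos).congr_deriv ?_
  rw [← mul_div_mul_left _ (hyperboloidHeight (x t) (y t)) two_ne_zero, hyperboloidHeight]
  congr 1
  push_cast
  ring

/-- `(x, y)` solves on `[a, b]` the phase-space equations of a vacuum squeezed by
`H = ω a†a - (ε / 4) (a + a†)²`. Only right derivatives are prescribed, so that the control `ε` may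
jump, as bang-bang controls do. -/
structure IsSqueezingTrajectory (ω : ℝ) (ε x y : ℝ → ℝ) (a b : ℝ) : Prop where
  continuousOn_fst : ContinuousOn x (Icc a b)
  continuousOn_snd : ContinuousOn y (Icc a b)
  hasDerivWithinAt_fst : ∀ t ∈ Ico a b,
    HasDerivWithinAt x (-(2 * ω - ε t) * y t) (Ici t) t
  hasDerivWithinAt_snd : ∀ t ∈ Ico a b,
    HasDerivWithinAt y ((2 * ω - ε t) * x t + ε t * hyperboloidHeight (x t) (y t)) (Ici t) t

namespace IsSqueezingTrajectory

variable {ω a b c d t : ℝ} {ε x y : ℝ → ℝ}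

theorem of_hasDerivAt (hx : ∀ t, HasDerivAt x (-(2 * ω - ε t) * y t) t)
    (hy : ∀ t, HasDerivAt y
      ((2 * ω - ε t) * x t + ε t * hyperboloidHeight (x t) (y t)) t) :
    IsSqueezingTrajectory ω ε x y a b where
  continuousOn_fst := HasDerivAt.continuousOn fun t _ ↦ hx t
  continuousOn_snd := HasDerivAt.continuousOn fun t _ ↦ hy t
  hasDerivWithinAt_fst t _ := (hx t).hasDerivWithinAt
  hasDerivWithinAt_snd t _ := (hy t).hasDerivWithinAt

theorem mono (h : IsSqueezingTrajectory ω ε x y a b) (hac : a ≤ c) (hdb : d ≤ b) :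
    IsSqueezingTrajectory ω ε x y c d where
  continuousOn_fst := h.continuousOn_fst.mono (Icc_subset_Icc hac hdb)
  continuousOn_snd := h.continuousOn_snd.mono (Icc_subset_Icc hac hdb)
  hasDerivWithinAt_fst t ht := h.hasDerivWithinAt_fst t (Ico_subset_Ico hac hdb ht)
  hasDerivWithinAt_snd t ht := h.hasDerivWithinAt_snd t (Ico_subset_Ico hac hdb ht)

theorem continuousOn_height (h : IsSqueezingTrajectory ω ε x y a b) :
    ContinuousOn (fun t ↦ hyperboloidHeight (x t) (y t)) (Icc a b) :=
  (((h.continuousOn_fst.pow 2).const_add 1).add (h.continuousOn_snd.pow 2)).sqrt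

theorem hasDerivWithinAt_height (h : IsSqueezingTrajectory ω ε x y a b) (ht : t ∈ Ico a b) :
    HasDerivWithinAt (fun r ↦ hyperboloidHeight (x r) (y r)) (ε t * y t) (Ici t) t := by
  refine (hasDerivWithinAt_hyperboloidHeight (h.hasDerivWithinAt_fst t ht)
    (h.hasDerivWithinAt_snd t ht)).congr_deriv ?_
  rw [div_eq_iff (hyperboloidHeight_pos _ _).ne']
  ring

theorem height_le_of_snd_nonpos (h : IsSqueezingTrajectory ω ε x y a b)
    (hε : ∀ t ∈ Ico a b, 0 ≤ ε t) (hy : ∀ t ∈ Ico a b, y t ≤ 0) (ht : t ∈ Icc a b) :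
    hyperboloidHeight (x t) (y t) ≤ hyperboloidHeight (x a) (y a) :=
  image_le_of_deriv_right_le_deriv_boundary h.continuousOn_height
    (fun _ ↦ h.hasDerivWithinAt_height) le_rfl continuousOn_const
    (fun r _ ↦ hasDerivWithinAt_const r _ _)
    (fun r hr ↦ mul_nonpos_of_nonneg_of_nonpos (hε r hr) (hy r hr)) ht

theorem fst_add_height_le_of_snd_nonneg (h : IsSqueezingTrajectory ω ε x y a b)
    (hε : ∀ t ∈ Ico a b, ε t ≤ ω) (hy : ∀ t ∈ Ico a b, 0 ≤ y t) (ht : t ∈ Icc a b) :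
    x t + hyperboloidHeight (x t) (y t) ≤ x a + hyperboloidHeight (x a) (y a) := by
  refine image_le_of_deriv_right_le_deriv_boundary
    (f := fun r ↦ x r + hyperboloidHeight (x r) (y r))
    (h.continuousOn_fst.add h.continuousOn_height)
    (fun r hr ↦ (h.hasDerivWithinAt_fst r hr).fun_add (h.hasDerivWithinAt_height hr)) le_rfl
    continuousOn_const (fun r _ ↦ hasDerivWithinAt_const r _ _) (fun r hr ↦ ?_) ht
  calc -(2 * ω - ε r) * y r + ε r * y r = -2 * ((ω - ε r) * y r) := by ring
    _ ≤ 0 := by linarith [mul_nonneg (sub_nonneg.2 (hε r hr)) (hy r hr)]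

theorem snd_le_of_snd_nonneg (h : IsSqueezingTrajectory ω ε x y a b)
    (hε : ∀ t ∈ Ico a b, ε t ∈ Icc 0 ω) (hy : ∀ t ∈ Ico a b, 0 ≤ y t) (ht : t ∈ Icc a b) :
    y t ≤ y a + ω * (x a + hyperboloidHeight (x a) (y a)) * (t - a) := by
  set C : ℝ → ℝ := fun r ↦ hyperboloidHeight (x r) (y r)
  refine image_le_of_deriv_right_le_deriv_boundary
    (B := fun r ↦ y a + ω * (x a + C a) * (r - a)) (B' := fun _ ↦ ω * (x a + C a))
    h.continuousOn_snd h.hasDerivWithinAt_snd (by simp) (by fun_prop) (fun r _ ↦ ?_)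
    (fun r hr ↦ ?_) ht
  · simpa using ((((hasDerivAt_id r).sub_const a).const_mul
      (ω * (x a + C a))).const_add (y a)).hasDerivWithinAt
  · have hω : 0 ≤ ω := (hε r hr).1.trans (hε r hr).2
    have hsum : x r + C r ≤ x a + C a :=
      h.fst_add_height_le_of_snd_nonneg (fun u hu ↦ (hε u hu).2) hy (Ico_subset_Icc_self hr)
    have hgap : 0 ≤ (ω - ε r) * (C r - x r) :=
      mul_nonneg (sub_nonneg.2 (hε r hr).2) (sub_nonneg.2 (le_hyperboloidHeight _ _))
    calc (2 * ω - ε r) * x r + ε r * C r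
        = ω * (x r + C r) - (ω - ε r) * (C r - x r) := by ring
      _ ≤ ω * (x r + C r) := sub_le_self _ hgap
      _ ≤ ω * (x a + C a) := mul_le_mul_of_nonneg_left hsum hω

theorem height_le_of_snd_nonneg (h : IsSqueezingTrajectory ω ε x y a b)
    (hε : ∀ t ∈ Ico a b, ε t ∈ Icc 0 ω) (hy : ∀ t ∈ Ico a b, 0 ≤ y t) (ht : t ∈ Icc a b) :
    hyperboloidHeight (x t) (y t) ≤ hyperboloidHeight (x a) (y a) + ω * y a * (t - a)
      + ω ^ 2 * (x a + hyperboloidHeight (x a) (y a)) / 2 * (t - a) ^ 2 := by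
  set C : ℝ → ℝ := fun r ↦ hyperboloidHeight (x r) (y r)
  refine image_le_of_deriv_right_le_deriv_boundary
    (B := fun r ↦ C a + ω * y a * (r - a) + ω ^ 2 * (x a + C a) / 2 * (r - a) ^ 2)
    (B' := fun r ↦ ω * (y a + ω * (x a + C a) * (r - a)))
    h.continuousOn_height (fun _ ↦ h.hasDerivWithinAt_height) (by simp [C]) (by fun_prop)
    (fun r _ ↦ ?_) (fun r hr ↦ ?_) ht
  · have hlin : HasDerivAt (fun u ↦ u - a) 1 r := (hasDerivAt_id r).sub_const a
    refine (((hlin.const_mul (ω * y a)).const_add (C a)).fun_add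
      ((hlin.fun_pow 2).const_mul (ω ^ 2 * (x a + C a) / 2))).hasDerivWithinAt.congr_deriv ?_
    push_cast
    ring
  · have hω : 0 ≤ ω := (hε r hr).1.trans (hε r hr).2
    calc ε r * y r ≤ ω * y r := mul_le_mul_of_nonneg_right (hε r hr).2 (hy r hr)
      _ ≤ ω * (y a + ω * (x a + C a) * (r - a)) :=
        mul_le_mul_of_nonneg_left (h.snd_le_of_snd_nonneg hε hy (Ico_subset_Icc_self hr)) hω

end IsSqueezingTrajectory

theorem single_winding_growth_bound_general {ω t₀ s t₁ : ℝ} {ε x y : ℝ → ℝ}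
    (h : IsSqueezingTrajectory ω ε x y t₀ t₁) (hε : ∀ t ∈ Ico t₀ t₁, ε t ∈ Icc 0 ω)
    (h₀s : t₀ ≤ s) (hs₁ : s ≤ t₁) (hy₀ : y t₀ = 0)
    (hupper : ∀ t ∈ Ico t₀ s, 0 ≤ y t) (hlower : ∀ t ∈ Ico s t₁, y t ≤ 0) :
    √(1 + x t₁ ^ 2 + y t₁ ^ 2) ≤ (1 + ω ^ 2 * (t₁ - t₀) ^ 2) * √(1 + x t₀ ^ 2) := by
  set C : ℝ → ℝ := fun t ↦ hyperboloidHeight (x t) (y t)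
  have hC₀ : √(1 + x t₀ ^ 2) = C t₀ := by simp [C, hyperboloidHeight, hy₀]
  have hC₀_nonneg : 0 ≤ C t₀ := (hyperboloidHeight_pos _ _).le
  have hmean : (x t₀ + C t₀) / 2 ≤ C t₀ := by linarith [le_hyperboloidHeight (x t₀) (y t₀)]
  have hfall : C t₁ ≤ C s :=
    (h.mono h₀s le_rfl).height_le_of_snd_nonpos
      (fun t ht ↦ (hε t (Ico_subset_Ico_left h₀s ht)).1) hlower (right_mem_Icc.2 hs₁)
  have hrise : C s ≤ C t₀ + ω * y t₀ * (s - t₀)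
      + ω ^ 2 * (x t₀ + C t₀) / 2 * (s - t₀) ^ 2 :=
    (h.mono le_rfl hs₁).height_le_of_snd_nonneg
      (fun t ht ↦ hε t (Ico_subset_Ico_right hs₁ ht)) hupper (right_mem_Icc.2 h₀s)
  calc C t₁ ≤ C s := hfall
    _ ≤ C t₀ + ω ^ 2 * ((x t₀ + C t₀) / 2) * (s - t₀) ^ 2 := by
      simpa only [hy₀, mul_zero, zero_mul, add_zero, mul_div_assoc] using hrise
    _ ≤ C t₀ + ω ^ 2 * C t₀ * (t₁ - t₀) ^ 2 := by
      have : 0 ≤ s - t₀ := sub_nonneg.2 h₀s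
      gcongr
    _ = (1 + ω ^ 2 * (t₁ - t₀) ^ 2) * √(1 + x t₀ ^ 2) := by rw [hC₀]; ring

/-- Paper's Lemma 1, single-winding growth bound: for the phase-space ODE
system with admissible control (`0 ≤ ε(t) ≤ ω`), if `t₀ ≤ s ≤ t₁`, `y(t₀) = 0`,
`y ≥ 0` on `[t₀, s]` and `y ≤ 0` on `[s, t₁]`, then
`√(1 + x(t₁)² + y(t₁)²) ≤ (1 + ω²(t₁ − t₀)²)·√(1 + x(t₀)²)`. -/
theorem single_winding_growth_bound
    (ω : ℝ) (hω : 0 < ω) (ε x y : ℝ → ℝ) (hε : Continuous ε)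
    (hadm : ∀ t, 0 ≤ ε t ∧ ε t ≤ ω)
    (hx : ∀ t, HasDerivAt x (-(2 * ω - ε t) * y t) t)
    (hy : ∀ t, HasDerivAt y ((2 * ω - ε t) * x t
      + ε t * Real.sqrt (1 + (x t) ^ 2 + (y t) ^ 2)) t)
    (t₀ s t₁ : ℝ) (h₀s : t₀ ≤ s) (hs₁ : s ≤ t₁) (hy0 : y t₀ = 0)
    (hupper : ∀ t ∈ Set.Icc t₀ s, 0 ≤ y t)
    (hlower : ∀ t ∈ Set.Icc s t₁, y t ≤ 0) :
    Real.sqrt (1 + (x t₁) ^ 2 + (y t₁) ^ 2)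
      ≤ (1 + ω ^ 2 * (t₁ - t₀) ^ 2) * Real.sqrt (1 + (x t₀) ^ 2) :=
  single_winding_growth_bound_general (.of_hasDerivAt hx hy) (fun t _ ↦ hadm t) h₀s hs₁ hy0
    (fun t ht ↦ hupper t (Ico_subset_Icc_self ht)) fun t ht ↦ hlower t (Ico_subset_Icc_self ht)
end

section
/- (Theorem 2, ODE form: no winding for monotone control.) For the phase-space ODE system with admissible control (0 ≤ ε(t) ≤ ω) such that ε is nondecreasing, and with initial condition x(0) = y(0) = 0: there do not exist times 0 ≤ τ < t₁ such that y(τ) = 0, x(τ) ≤ 0, y(t) ≤ 0 for all t ∈ [τ, t₁], y(t₁) = 0, and x(t₁) > 0. That is, the trajectory can never cross the strictly positive x-axis after traversing the lower half-plane, so the winding number of the phase-space trajectory remains zero for any monotonically increasing control. -/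
/-!
Writing `c = cosh 2r`, the variance `u = c - x` of the quadrature `a + a†` obeys `u' = 2ωy`, and
four times the energy excess over the vacuum is `E = 2ω(c - 1) - ε(u - 1)`. Since `c' = εy`, energy
changes only through the control: formally `E' = -ε'(u - 1)`, so for nondecreasing `ε` the excess
cannot grow while `u ≥ 1`. Conversely `E ≤ 0` forces `u ≥ 1`, with equality only at the vacuum
`x = y = 0`, so the condition could only be lost by leaving from the vacuum. There `w = u - 1`
satisfies `w'' ≥ -(2ω)² w` with vanishing initial data, and Sturm comparison keeps `w ≥ 0` for a
time `π / (2ω)`. Hence `u ≥ 1` throughout, which confines the trajectory to `2x ≤ y²`.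
-/

section

open Set Filter Topology

/-- The quantity `cosh (2r)` of the squeezed vacuum state whose phase-space point is
`(x, y) = (sinh (2r) cos φ, sinh (2r) sin φ)`. -/
noncomputable def coshTwoR (x y : ℝ) : ℝ :=
  √(1 + x ^ 2 + y ^ 2)

/-- The variance `⟨(a + a†)²⟩` in the squeezed vacuum state at `(x, y)`, equal to `1` in the
vacuum. -/
noncomputable def quadratureVariance (x y : ℝ) : ℝ :=
  coshTwoR x y - x

/-- Four times the difference between the expectations of `ω a†a - (e / 4)(a + a†)²` in the squeezed
vacuum state at `(x, y)` and in the vacuum. -/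
noncomputable def excessEnergy (ω e x y : ℝ) : ℝ :=
  2 * ω * (coshTwoR x y - 1) - e * (quadratureVariance x y - 1)

/-- The equations of motion of the squeezed vacuum state under
`H(t) = ω a†a - (ε(t) / 4)(a + a†)²`, in phase-space coordinates. -/
structure IsPhaseTrajectory (ω : ℝ) (ε x y : ℝ → ℝ) : Prop where
  hasDerivAt_x : ∀ t, HasDerivAt x (-(2 * ω - ε t) * y t) t
  hasDerivAt_y : ∀ t, HasDerivAt y ((2 * ω - ε t) * x t + ε t * coshTwoR (x t) (y t)) t

theorem antitoneOn_sub_mul_of_hasDerivAt {a b : ℝ} {f g g' ε : ℝ → ℝ}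
    (hε : ContinuousOn ε (Icc a b)) (hmono : MonotoneOn ε (Icc a b))
    (hf : ∀ t ∈ Icc a b, HasDerivAt f (ε t * g' t) t)
    (hg : ∀ t ∈ Icc a b, HasDerivAt g (g' t) t) (hg_nonneg : ∀ t ∈ Icc a b, 0 ≤ g t) :
    AntitoneOn (fun t ↦ f t - ε t * g t) (Icc a b) := by
  intro p hp q hq hpq
  have hsub : Icc p q ⊆ Icc a b := Icc_subset_Icc hp.1 hq.2
  have hcont : ContinuousOn (fun t ↦ f t - ε t * g t) (Icc a b) :=
    (HasDerivAt.continuousOn hf).sub (hε.mul (HasDerivAt.continuousOn hg))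
  refine image_le_of_liminf_slope_right_le_deriv_boundary (B := fun _ ↦ f p - ε p * g p)
    (hcont.mono hsub) le_rfl continuousOn_const
    (fun s _ ↦ (hasDerivAt_const s _).hasDerivWithinAt) (fun s hs r hr ↦ ?_)
    ⟨hpq, le_rfl⟩
  have hs' : s ∈ Icc a b := hsub (Ico_subset_Icc_self hs)
  -- Freezing the control at its value `ε s` makes the derivative vanish, and can only increase
  -- the later values because `g ≥ 0`.
  have hfrozen : HasDerivAt (fun t ↦ f t - ε s * g t) 0 s :=
    ((hf s hs').sub ((hg s hs').const_mul (ε s))).congr_deriv (sub_self _)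
  have hslope : ∀ᶠ z in 𝓝[>] s, slope (fun t ↦ f t - ε s * g t) s z < r :=
    hfrozen.hasDerivWithinAt.limsup_slope_le' self_notMem_Ioi hr
  refine Eventually.frequently ?_
  filter_upwards [hslope, Ioo_mem_nhdsGT hs.2] with z hz hsz
  have hz' : z ∈ Icc a b := hsub ⟨hs.1.trans hsz.1.le, hsz.2.le⟩
  have hmul : ε s * g z ≤ ε z * g z :=
    mul_le_mul_of_nonneg_right (hmono hs' hz' hsz.1.le) (hg_nonneg z hz')
  refine lt_of_le_of_lt ?_ hz
  simp only [slope_def_field]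
  have : 0 ≤ z - s := sub_nonneg.mpr hsz.1.le
  gcongr

theorem oscillator_le_of_hasDerivAt {k s t : ℝ} {w y y' : ℝ → ℝ} (hk : 0 ≤ k) (hst : s ≤ t)
    (hkt : k * (t - s) ≤ Real.pi) (hw : ∀ r ∈ Icc s t, HasDerivAt w (k * y r) r)
    (hy : ∀ r ∈ Icc s t, HasDerivAt y (y' r) r) (hle : ∀ r ∈ Icc s t, -(k * w r) ≤ y' r) :
    w s * Real.cos (k * (t - s)) + y s * Real.sin (k * (t - s)) ≤ w t := by
  let G : ℝ → ℝ := fun r ↦ w r * Real.cos (k * (t - r)) + y r * Real.sin (k * (t - r))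
  have hG : ∀ r ∈ Icc s t, HasDerivAt G ((y' r + k * w r) * Real.sin (k * (t - r))) r := by
    intro r hr
    have hphase : HasDerivAt (fun r ↦ k * (t - r)) (k * (-1)) r :=
      ((hasDerivAt_id r).const_sub t).const_mul k
    exact (((hw r hr).mul hphase.cos).add ((hy r hr).mul hphase.sin)).congr_deriv (by ring)
  have hG_mono : MonotoneOn G (Icc s t) := by
    refine monotoneOn_of_hasDerivWithinAt_nonneg (convex_Icc s t) (HasDerivAt.continuousOn hG)
      (fun r hr ↦ (hG r (interior_subset hr)).hasDerivWithinAt) (fun r hr ↦ ?_)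
    obtain ⟨hsr, hrt⟩ := interior_subset hr
    have hphase_le : k * (t - r) ≤ Real.pi :=
      (mul_le_mul_of_nonneg_left (sub_le_sub_left hsr t) hk).trans hkt
    exact mul_nonneg (by linarith [hle r ⟨hsr, hrt⟩])
      (Real.sin_nonneg_of_nonneg_of_le_pi (mul_nonneg hk (sub_nonneg.mpr hrt)) hphase_le)
  simpa [G] using hG_mono (left_mem_Icc.mpr hst) (right_mem_Icc.mpr hst) hst

theorem coshTwoR_sq (x y : ℝ) : coshTwoR x y ^ 2 = 1 + x ^ 2 + y ^ 2 :=
  Real.sq_sqrt (by positivity)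

theorem one_le_coshTwoR (x y : ℝ) : 1 ≤ coshTwoR x y :=
  Real.one_le_sqrt.mpr (by nlinarith [sq_nonneg x, sq_nonneg y])

theorem coshTwoR_eq_one_iff {x y : ℝ} : coshTwoR x y = 1 ↔ x = 0 ∧ y = 0 := by
  rw [coshTwoR, Real.sqrt_eq_one, add_assoc, add_eq_left,
    add_eq_zero_iff_of_nonneg (sq_nonneg x) (sq_nonneg y), sq_eq_zero_iff, sq_eq_zero_iff]

@[simp]
theorem coshTwoR_zero_zero : coshTwoR 0 0 = 1 :=
  coshTwoR_eq_one_iff.mpr ⟨rfl, rfl⟩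

theorem quadratureVariance_nonneg (x y : ℝ) : 0 ≤ quadratureVariance x y :=
  sub_nonneg.mpr (Real.le_sqrt_of_sq_le (by nlinarith [sq_nonneg y]))

theorem quadratureVariance_zero_zero : quadratureVariance 0 0 = 1 := by
  simp [quadratureVariance]

theorem excessEnergy_zero_zero (ω e : ℝ) : excessEnergy ω e 0 0 = 0 := by
  simp [excessEnergy, quadratureVariance_zero_zero]

theorem one_le_quadratureVariance_iff {x y : ℝ} : 1 ≤ quadratureVariance x y ↔ 2 * x ≤ y ^ 2 := by
  have hsq := coshTwoR_sq x y
  have hc := one_le_coshTwoR x y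
  rw [quadratureVariance, le_sub_iff_add_le]
  constructor
  · intro h
    rcases le_total x 0 with hx | hx
    · nlinarith [sq_nonneg y]
    · nlinarith
  · intro h
    exact le_of_sq_le_sq (by nlinarith) (by linarith)

theorem eq_zero_of_excessEnergy_nonpos_of_quadratureVariance_le_one {ω e x y : ℝ} (hω : 0 < ω)
    (he : 0 ≤ e) (hE : excessEnergy ω e x y ≤ 0) (hu : quadratureVariance x y ≤ 1) :
    x = 0 ∧ y = 0 := by
  rw [excessEnergy, sub_nonpos] at hE
  have hcosh : coshTwoR x y - 1 ≤ 0 :=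
    nonpos_of_mul_nonpos_right
      (hE.trans (mul_nonpos_of_nonneg_of_nonpos he (sub_nonpos.mpr hu))) (by positivity)
  exact coshTwoR_eq_one_iff.mp (le_antisymm (sub_nonpos.mp hcosh) (one_le_coshTwoR x y))

theorem one_le_quadratureVariance_of_excessEnergy_nonpos {ω e x y : ℝ} (hω : 0 < ω)
    (he : 0 ≤ e) (hE : excessEnergy ω e x y ≤ 0) : 1 ≤ quadratureVariance x y := by
  rcases le_total 1 (quadratureVariance x y) with hu | hu
  · exact hu
  · obtain ⟨rfl, rfl⟩ :=
      eq_zero_of_excessEnergy_nonpos_of_quadratureVariance_le_one hω he hE hu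
    exact quadratureVariance_zero_zero.ge

namespace IsPhaseTrajectory

variable {ω : ℝ} {ε x y : ℝ → ℝ}

theorem hasDerivAt_coshTwoR (h : IsPhaseTrajectory ω ε x y) (t : ℝ) :
    HasDerivAt (fun t ↦ coshTwoR (x t) (y t)) (ε t * y t) t := by
  have hpos : 0 < coshTwoR (x t) (y t) := one_pos.trans_le (one_le_coshTwoR _ _)
  have hsqrt := ((((h.hasDerivAt_x t).fun_pow 2).const_add 1).fun_add
    ((h.hasDerivAt_y t).fun_pow 2)).sqrt (by positivity)
  refine hsqrt.congr_deriv ?_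
  rw [← coshTwoR]
  field_simp
  push_cast
  ring

theorem hasDerivAt_quadratureVariance (h : IsPhaseTrajectory ω ε x y) (t : ℝ) :
    HasDerivAt (fun t ↦ quadratureVariance (x t) (y t)) (2 * ω * y t) t :=
  ((h.hasDerivAt_coshTwoR t).sub (h.hasDerivAt_x t)).congr_deriv (by ring)

theorem continuous_quadratureVariance (h : IsPhaseTrajectory ω ε x y) :
    Continuous fun t ↦ quadratureVariance (x t) (y t) :=
  continuous_iff_continuousAt.mpr fun t ↦ (h.hasDerivAt_quadratureVariance t).continuousAt

theorem antitoneOn_excessEnergy (h : IsPhaseTrajectory ω ε x y) {a b : ℝ}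
    (hε : ContinuousOn ε (Icc a b)) (hmono : MonotoneOn ε (Icc a b))
    (hu : ∀ t ∈ Icc a b, 1 ≤ quadratureVariance (x t) (y t)) :
    AntitoneOn (fun t ↦ excessEnergy ω (ε t) (x t) (y t)) (Icc a b) :=
  antitoneOn_sub_mul_of_hasDerivAt hε hmono
    (fun t _ ↦ (((h.hasDerivAt_coshTwoR t).sub_const 1).const_mul (2 * ω)).congr_deriv
      (mul_left_comm _ _ _))
    (fun t _ ↦ (h.hasDerivAt_quadratureVariance t).sub_const 1)
    (fun t ht ↦ sub_nonneg.mpr (hu t ht))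

theorem one_le_quadratureVariance_of_eq_zero (h : IsPhaseTrajectory ω ε x y) (hω : 0 < ω)
    {s t : ℝ} (hε : ∀ r ∈ Icc s t, 0 ≤ ε r) (hx : x s = 0) (hy : y s = 0) (hst : s ≤ t)
    (ht : t ≤ s + Real.pi / (2 * ω)) : 1 ≤ quadratureVariance (x t) (y t) := by
  have hphase : 2 * ω * (t - s) ≤ Real.pi := by
    rw [← le_div_iff₀' (by positivity)]
    linarith
  have hle : ∀ r ∈ Icc s t, -(2 * ω * (quadratureVariance (x r) (y r) - 1)) ≤
      (2 * ω - ε r) * x r + ε r * coshTwoR (x r) (y r) := by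
    intro r hr
    have hkinetic : 0 ≤ 2 * ω * (coshTwoR (x r) (y r) - 1) :=
      mul_nonneg (by positivity) (sub_nonneg.mpr (one_le_coshTwoR _ _))
    have hdrive : 0 ≤ ε r * quadratureVariance (x r) (y r) :=
      mul_nonneg (hε r hr) (quadratureVariance_nonneg _ _)
    rw [quadratureVariance] at hdrive ⊢
    linarith
  have hcompare := oscillator_le_of_hasDerivAt (by positivity) hst hphase
    (fun r _ ↦ (h.hasDerivAt_quadratureVariance r).sub_const 1)
    (fun r _ ↦ h.hasDerivAt_y r) hle
  simpa [hx, hy, quadratureVariance_zero_zero] using hcompare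

theorem eventually_one_le_quadratureVariance (h : IsPhaseTrajectory ω ε x y) (hω : 0 < ω)
    {s : ℝ} (hε : ∀ t, s ≤ t → 0 ≤ ε t) (hE : excessEnergy ω (ε s) (x s) (y s) ≤ 0) :
    ∀ᶠ t in 𝓝[>] s, 1 ≤ quadratureVariance (x t) (y t) := by
  rcases lt_or_ge 1 (quadratureVariance (x s) (y s)) with hu | hu
  · have hnear := h.continuous_quadratureVariance.continuousAt.eventually_const_lt hu
    exact (hnear.filter_mono nhdsWithin_le_nhds).mono fun _ ↦ le_of_lt
  · obtain ⟨hxs, hys⟩ :=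
      eq_zero_of_excessEnergy_nonpos_of_quadratureVariance_le_one hω (hε s le_rfl) hE hu
    have htime : s < s + Real.pi / (2 * ω) := lt_add_of_pos_right s (by positivity)
    filter_upwards [Icc_mem_nhdsGT htime] with t ht
    exact h.one_le_quadratureVariance_of_eq_zero hω (fun r hr ↦ hε r hr.1) hxs hys ht.1 ht.2

theorem one_le_quadratureVariance (h : IsPhaseTrajectory ω ε x y) (hω : 0 < ω) {a t : ℝ}
    (hε : ContinuousOn ε (Ici a)) (hmono : MonotoneOn ε (Ici a)) (hεa : 0 ≤ ε a)
    (hE : excessEnergy ω (ε a) (x a) (y a) ≤ 0) (hat : a ≤ t) :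
    1 ≤ quadratureVariance (x t) (y t) := by
  have hclosed : IsClosed {s | 1 ≤ quadratureVariance (x s) (y s)} :=
    isClosed_le continuous_const h.continuous_quadratureVariance
  refine (hclosed.inter isClosed_Icc).Icc_subset_of_forall_mem_nhdsGT_of_Icc_subset
    (one_le_quadratureVariance_of_excessEnergy_nonpos hω hεa hE) (fun s hs hu ↦ ?_)
    (right_mem_Icc.mpr hat)
  have hEs : excessEnergy ω (ε s) (x s) (y s) ≤ 0 :=
    (h.antitoneOn_excessEnergy (hε.mono Icc_subset_Ici_self) (hmono.mono Icc_subset_Ici_self) hu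
      (left_mem_Icc.mpr hs.1) (right_mem_Icc.mpr hs.1) hs.1).trans hE
  have hε_nonneg : ∀ r, s ≤ r → 0 ≤ ε r :=
    fun r hr ↦ hεa.trans (hmono self_mem_Ici (hs.1.trans hr) (hs.1.trans hr))
  exact h.eventually_one_le_quadratureVariance hω hε_nonneg hEs

end IsPhaseTrajectory

theorem no_winding_for_monotone_control_general {ω : ℝ} (hω : 0 < ω) {ε x y : ℝ → ℝ}
    (hε : ContinuousOn ε (Ici 0)) (hmono : MonotoneOn ε (Ici 0)) (hε0 : 0 ≤ ε 0)
    (h : IsPhaseTrajectory ω ε x y) (hx0 : x 0 = 0) (hy0 : y 0 = 0) {t : ℝ} (ht : 0 ≤ t) :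
    2 * x t ≤ y t ^ 2 := by
  have hE0 : excessEnergy ω (ε 0) (x 0) (y 0) ≤ 0 := by
    rw [hx0, hy0, excessEnergy_zero_zero]
  exact one_le_quadratureVariance_iff.mp (h.one_le_quadratureVariance hω hε hmono hε0 hE0 ht)

end

/-- Theorem 2, ODE form: for the phase-space ODE system with admissible
nondecreasing control and initial condition at the origin, there are no times
`0 ≤ τ < t₁` with `y(τ) = 0`, `x(τ) ≤ 0`, `y ≤ 0` on `[τ, t₁]`, `y(t₁) = 0` and
`x(t₁) > 0`: the trajectory can never cross the strictly positive `x`-axis after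
traversing the lower half-plane, so the winding number remains zero. -/
theorem no_winding_for_monotone_control
    (ω : ℝ) (hω : 0 < ω) (ε x y : ℝ → ℝ) (hε : Continuous ε)
    (hadm : ∀ t, 0 ≤ ε t ∧ ε t ≤ ω) (hmono : Monotone ε)
    (hx : ∀ t, HasDerivAt x (-(2 * ω - ε t) * y t) t)
    (hy : ∀ t, HasDerivAt y ((2 * ω - ε t) * x t
      + ε t * Real.sqrt (1 + (x t) ^ 2 + (y t) ^ 2)) t)
    (hx0 : x 0 = 0) (hy0 : y 0 = 0) :
    ¬ ∃ τ t₁ : ℝ, 0 ≤ τ ∧ τ < t₁ ∧ y τ = 0 ∧ x τ ≤ 0 ∧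
        (∀ t ∈ Set.Icc τ t₁, y t ≤ 0) ∧ y t₁ = 0 ∧ 0 < x t₁ := by
  rintro ⟨τ, t₁, hτ, hτt₁, -, -, -, hyt₁, hxt₁⟩
  have hparabola := no_winding_for_monotone_control_general hω hε.continuousOn
    (hmono.monotoneOn _) (hadm 0).1 ⟨hx, hy⟩ hx0 hy0 (hτ.trans hτt₁.le)
  rw [hyt₁] at hparabola
  linarith
end

section
/- (Squeezing cap at re-entry into the upper half-plane.) For the phase-space ODE system with 0 ≤ ε(t) ≤ ε_max for all t, where ε_max < ω: if at some time t* one has y(t*) = 0, x(t*) ≤ 0, and y'(t*) ≥ 0, then (√(1 + x(t*)²) − x(t*))² ≤ ω/(ω − ε_max). Equivalently, writing x(t*) = −sinh(2r(t*)), the squeezing at re-entry satisfies e^{4r(t*)} ≤ ω/(ω − ε_max). -/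
/-!
On the real axis write `x = -sinh (2r)`. The vertical velocity there is
`ω e^{-2r} - (ω - ε) e^{2r}`: it is nonnegative exactly when `(ω - ε) e^{4r} ≤ ω`. So the direction
of crossing alone bounds the squeezing `e^{4r}`, and the bound is weakest at the largest control.
-/

open Real

/-- The right-hand side of the equation of motion for `y`, at control value `ε` and phase-space
point `(x, y)`; a trajectory that enters the upper half-plane through `(x, 0)` has it nonnegative
there. -/
noncomputable def verticalVelocity (ω ε x y : ℝ) : ℝ :=
  (2 * ω - ε) * x + ε * √(1 + x ^ 2 + y ^ 2)

theorem sqrt_one_add_sinh_sq (u : ℝ) : √(1 + sinh u ^ 2) = cosh u := by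
  rw [← cosh_sq', sqrt_sq (cosh_pos u).le]

theorem verticalVelocity_neg_sinh_zero (ω ε r : ℝ) :
    verticalVelocity ω ε (-sinh (2 * r)) 0 =
      ω * exp (-(2 * r)) - (ω - ε) * exp (2 * r) := by
  rw [verticalVelocity, zero_pow two_ne_zero, add_zero, neg_sq, sqrt_one_add_sinh_sq,
    ← cosh_sub_sinh, ← cosh_add_sinh]
  ring

theorem verticalVelocity_neg_sinh_zero_nonneg_iff (ω ε r : ℝ) :
    0 ≤ verticalVelocity ω ε (-sinh (2 * r)) 0 ↔ (ω - ε) * exp (4 * r) ≤ ω := by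
  have exp_four_mul : exp (4 * r) = exp (2 * r) / exp (-(2 * r)) := by
    rw [← exp_sub]
    ring_nf
  rw [verticalVelocity_neg_sinh_zero, sub_nonneg, exp_four_mul, ← mul_div_assoc,
    div_le_iff₀ (exp_pos _)]

theorem exp_four_mul_le_of_verticalVelocity_nonneg {ω ε εmax r : ℝ} (hεmax : εmax < ω)
    (hε : ε ≤ εmax) (hv : 0 ≤ verticalVelocity ω ε (-sinh (2 * r)) 0) :
    exp (4 * r) ≤ ω / (ω - εmax) := by
  rw [le_div_iff₀' (sub_pos.2 hεmax)]
  calc (ω - εmax) * exp (4 * r) ≤ (ω - ε) * exp (4 * r) := by gcongr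
    _ ≤ ω := (verticalVelocity_neg_sinh_zero_nonneg_iff ω ε r).1 hv

theorem squeezing_cap_at_reentry_general {ω ε εmax x : ℝ} (hεmax : εmax < ω) (hε : ε ≤ εmax)
    (hv : 0 ≤ verticalVelocity ω ε x 0) :
    (√(1 + x ^ 2) - x) ^ 2 ≤ ω / (ω - εmax) := by
  obtain ⟨r, rfl⟩ : ∃ r, x = -sinh (2 * r) :=
    ⟨-arsinh x / 2, by rw [mul_div_cancel₀ _ two_ne_zero, sinh_neg, sinh_arsinh, neg_neg]⟩
  calc (√(1 + (-sinh (2 * r)) ^ 2) - -sinh (2 * r)) ^ 2 = exp (2 * r) ^ 2 := by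
        rw [neg_sq, sqrt_one_add_sinh_sq, sub_neg_eq_add, cosh_add_sinh]
    _ = exp (4 * r) := by
        rw [← exp_nat_mul]
        ring_nf
    _ ≤ ω / (ω - εmax) := exp_four_mul_le_of_verticalVelocity_nonneg hεmax hε hv

/-- squeezing cap at re-entry into the upper half-plane: for the
phase-space ODE system with `0 ≤ ε(t) ≤ ε_max < ω`, if at some time `t*` one has
`y(t*) = 0`, `x(t*) ≤ 0` and `y'(t*) ≥ 0`, then
`(√(1 + x(t*)²) − x(t*))² ≤ ω/(ω − ε_max)` (i.e. `e^{4r(t*)} ≤ ω/(ω − ε_max)`). -/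
theorem squeezing_cap_at_reentry
    (ω : ℝ) (hω : 0 < ω) (ε x y : ℝ → ℝ) (hε : Continuous ε)
    (εmax : ℝ) (hεmax : εmax < ω) (hbd : ∀ t, 0 ≤ ε t ∧ ε t ≤ εmax)
    (hx : ∀ t, HasDerivAt x (-(2 * ω - ε t) * y t) t)
    (hy : ∀ t, HasDerivAt y ((2 * ω - ε t) * x t
      + ε t * Real.sqrt (1 + (x t) ^ 2 + (y t) ^ 2)) t)
    (tst : ℝ) (hyt : y tst = 0) (hxt : x tst ≤ 0)
    (hdy : 0 ≤ (2 * ω - ε tst) * x tst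
      + ε tst * Real.sqrt (1 + (x tst) ^ 2 + (y tst) ^ 2)) :
    (Real.sqrt (1 + (x tst) ^ 2) - x tst) ^ 2 ≤ ω / (ω - εmax) :=
  squeezing_cap_at_reentry_general hεmax (hbd tst).2 (hyt ▸ hdy)
end

section
/- (Paper's Lemma 2: per-winding growth factor away from criticality.) For the phase-space ODE system with 0 ≤ ε(t) ≤ ε_max for all t, where ε_max < ω: suppose t₀ ≤ s ≤ t₁, y(t₀) = 0, y(t) ≥ 0 for all t ∈ [t₀, s], and y(t) ≤ 0 for all t ∈ [s, t₁]. Then √(1 + x(t₁)² + y(t₁)²) ≤ (ω/(ω − ε_max))·√(1 + x(t₀)²); equivalently, cosh(2r(t₁)) ≤ (1/(1 − ε_max/ω))·cosh(2r(t₀)), a bound independent of the elapsed time t₁ − t₀. -/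
/-!
Freezing the control at a constant value `c` makes `(2ω - c) cosh(2r) + c x` a conserved energy.
Under the actual control `ε` this energy changes at the rate `2ω (ε - c) y`, so it decreases as
long as `(ε - c) y ≤ 0`. Since `|x| ≤ cosh(2r)`, it lies between `2 (ω - c) cosh(2r)` and
`2ω cosh(2r)`, hence `cosh(2r)` grows by at most the factor `ω / (ω - c)` meanwhile.
Take `c = ε_max` while `y ≥ 0`, and `c = 0`, for which the factor is `1`, while `y ≤ 0`.
-/

/-- The value `cosh(2r)` of the squeezed vacuum with phase-space coordinates
`x = sinh(2r) cos φ` and `y = sinh(2r) sin φ`. -/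
noncomputable def coshSqueezing (x y : ℝ) : ℝ :=
  √(1 + x ^ 2 + y ^ 2)

/-- The energy `4⟨H⟩ + 2ω` of the squeezed vacuum at `(x, y)` under the Hamiltonian `H` whose
control is frozen at the value `c`; the affine normalization removes denominators and constants. -/
noncomputable def frozenEnergy (ω c x y : ℝ) : ℝ :=
  (2 * ω - c) * coshSqueezing x y + c * x

/-- The pair `(x, y)` solves on `S` the equations of motion of the squeezed vacuum with frequency
`ω` and control `ε`. Derivatives are taken within `S`, so they are one-sided at the endpoints of an
interval. -/
structure IsSqueezingTrajectoryOn (ω : ℝ) (ε x y : ℝ → ℝ) (S : Set ℝ) : Prop where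
  hasDerivWithinAt_fst : ∀ t ∈ S, HasDerivWithinAt x (-(2 * ω - ε t) * y t) S t
  hasDerivWithinAt_snd : ∀ t ∈ S,
    HasDerivWithinAt y ((2 * ω - ε t) * x t + ε t * coshSqueezing (x t) (y t)) S t

theorem coshSqueezing_pos (x y : ℝ) : 0 < coshSqueezing x y :=
  Real.sqrt_pos.2 (by positivity)

theorem abs_le_coshSqueezing (x y : ℝ) : |x| ≤ coshSqueezing x y :=
  Real.abs_le_sqrt (by linarith [sq_nonneg y])

theorem hasDerivWithinAt_coshSqueezing_comp {x y : ℝ → ℝ} {x' y' t : ℝ} {S : Set ℝ}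
    (hx : HasDerivWithinAt x x' S t) (hy : HasDerivWithinAt y y' S t) :
    HasDerivWithinAt (fun t => coshSqueezing (x t) (y t))
      ((x t * x' + y t * y') / coshSqueezing (x t) (y t)) S t := by
  have hpos : 0 < 1 + x t ^ 2 + y t ^ 2 := by positivity
  refine ((((hx.pow 2).const_add 1).add (hy.pow 2)).sqrt hpos.ne').congr_deriv ?_
  have hcosh := (coshSqueezing_pos (x t) (y t)).ne'
  simp only [coshSqueezing, Pi.add_apply, Pi.pow_apply] at hcosh ⊢
  field_simp
  ring

theorem mul_coshSqueezing_le_frozenEnergy {c : ℝ} (hc : 0 ≤ c) (ω x y : ℝ) :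
    2 * (ω - c) * coshSqueezing x y ≤ frozenEnergy ω c x y := by
  have hx : c * -coshSqueezing x y ≤ c * x :=
    mul_le_mul_of_nonneg_left (abs_le.1 (abs_le_coshSqueezing x y)).1 hc
  unfold frozenEnergy
  linarith

theorem frozenEnergy_le_mul_coshSqueezing {c : ℝ} (hc : 0 ≤ c) (ω x y : ℝ) :
    frozenEnergy ω c x y ≤ 2 * ω * coshSqueezing x y := by
  have hx : c * x ≤ c * coshSqueezing x y :=
    mul_le_mul_of_nonneg_left (abs_le.1 (abs_le_coshSqueezing x y)).2 hc
  unfold frozenEnergy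
  linarith

namespace IsSqueezingTrajectoryOn

variable {ω : ℝ} {ε x y : ℝ → ℝ} {S : Set ℝ}

theorem mono {T : Set ℝ} (h : IsSqueezingTrajectoryOn ω ε x y T) (hST : S ⊆ T) :
    IsSqueezingTrajectoryOn ω ε x y S where
  hasDerivWithinAt_fst t ht := (h.hasDerivWithinAt_fst t (hST ht)).mono hST
  hasDerivWithinAt_snd t ht := (h.hasDerivWithinAt_snd t (hST ht)).mono hST

theorem hasDerivWithinAt_coshSqueezing (h : IsSqueezingTrajectoryOn ω ε x y S) {t : ℝ}
    (ht : t ∈ S) :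
    HasDerivWithinAt (fun t => coshSqueezing (x t) (y t)) (ε t * y t) S t := by
  refine (hasDerivWithinAt_coshSqueezing_comp (h.hasDerivWithinAt_fst t ht)
    (h.hasDerivWithinAt_snd t ht)).congr_deriv ?_
  rw [div_eq_iff (coshSqueezing_pos _ _).ne']
  ring

theorem hasDerivWithinAt_frozenEnergy (h : IsSqueezingTrajectoryOn ω ε x y S) (c : ℝ) {t : ℝ}
    (ht : t ∈ S) :
    HasDerivWithinAt (fun t => frozenEnergy ω c (x t) (y t)) (2 * ω * ((ε t - c) * y t)) S t :=
  (((h.hasDerivWithinAt_coshSqueezing ht).const_mul (2 * ω - c)).add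
    ((h.hasDerivWithinAt_fst t ht).const_mul c)).congr_deriv (by ring)

theorem antitoneOn_frozenEnergy (h : IsSqueezingTrajectoryOn ω ε x y S) (hS : Convex ℝ S)
    (hω : 0 ≤ ω) {c : ℝ} (hc : ∀ t ∈ S, (ε t - c) * y t ≤ 0) :
    AntitoneOn (fun t => frozenEnergy ω c (x t) (y t)) S :=
  antitoneOn_of_hasDerivWithinAt_nonpos hS
    (fun _ ht => (h.hasDerivWithinAt_frozenEnergy c ht).continuousWithinAt)
    (fun _ ht => (h.hasDerivWithinAt_frozenEnergy c (interior_subset ht)).mono interior_subset)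
    (fun t ht => mul_nonpos_of_nonneg_of_nonpos (by positivity) (hc t (interior_subset ht)))

theorem coshSqueezing_le_of_sub_mul_nonpos (h : IsSqueezingTrajectoryOn ω ε x y S) (hS : Convex ℝ S)
    {c : ℝ} (hc₀ : 0 ≤ c) (hcω : c < ω) (hc : ∀ t ∈ S, (ε t - c) * y t ≤ 0)
    {a b : ℝ} (ha : a ∈ S) (hb : b ∈ S) (hab : a ≤ b) :
    coshSqueezing (x b) (y b) ≤ ω / (ω - c) * coshSqueezing (x a) (y a) := by
  have energy_bound :=
    calc 2 * (ω - c) * coshSqueezing (x b) (y b)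
      _ ≤ frozenEnergy ω c (x b) (y b) := mul_coshSqueezing_le_frozenEnergy hc₀ ..
      _ ≤ frozenEnergy ω c (x a) (y a) :=
        h.antitoneOn_frozenEnergy hS (hc₀.trans hcω.le) hc ha hb hab
      _ ≤ 2 * ω * coshSqueezing (x a) (y a) := frozenEnergy_le_mul_coshSqueezing hc₀ ..
  rw [div_mul_eq_mul_div, le_div_iff₀ (sub_pos.2 hcω)]
  linarith

end IsSqueezingTrajectoryOn

theorem single_winding_growth_bound_subcritical_general
    {ω εmax : ℝ} (hεmax₀ : 0 ≤ εmax) (hεmax : εmax < ω) {ε x y : ℝ → ℝ} {t₀ s t₁ : ℝ}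
    (h : IsSqueezingTrajectoryOn ω ε x y (Set.Icc t₀ t₁)) (h₀s : t₀ ≤ s) (hs₁ : s ≤ t₁)
    (hε_le : ∀ t ∈ Set.Icc t₀ s, ε t ≤ εmax) (hε_nonneg : ∀ t ∈ Set.Icc s t₁, 0 ≤ ε t)
    (hupper : ∀ t ∈ Set.Icc t₀ s, 0 ≤ y t) (hlower : ∀ t ∈ Set.Icc s t₁, y t ≤ 0) :
    coshSqueezing (x t₁) (y t₁) ≤ ω / (ω - εmax) * coshSqueezing (x t₀) (y t₀) := by
  have hω : 0 < ω := hεmax₀.trans_lt hεmax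
  have upper_half : coshSqueezing (x s) (y s) ≤
      ω / (ω - εmax) * coshSqueezing (x t₀) (y t₀) :=
    (h.mono (Set.Icc_subset_Icc_right hs₁)).coshSqueezing_le_of_sub_mul_nonpos
      (convex_Icc t₀ s) hεmax₀ hεmax
      (fun t ht => mul_nonpos_of_nonpos_of_nonneg (sub_nonpos.2 (hε_le t ht)) (hupper t ht))
      (Set.left_mem_Icc.2 h₀s) (Set.right_mem_Icc.2 h₀s) h₀s
  have lower_half : coshSqueezing (x t₁) (y t₁) ≤ ω / (ω - 0) * coshSqueezing (x s) (y s) :=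
    (h.mono (Set.Icc_subset_Icc_left h₀s)).coshSqueezing_le_of_sub_mul_nonpos
      (convex_Icc s t₁) le_rfl hω
      (fun t ht => mul_nonpos_of_nonneg_of_nonpos (sub_nonneg.2 (hε_nonneg t ht)) (hlower t ht))
      (Set.left_mem_Icc.2 hs₁) (Set.right_mem_Icc.2 hs₁) hs₁
  rw [sub_zero, div_self hω.ne', one_mul] at lower_half
  exact lower_half.trans upper_half

/-- Paper's Lemma 2: per-winding growth factor away from criticality:
for the phase-space ODE system with `0 ≤ ε(t) ≤ ε_max < ω`, if `t₀ ≤ s ≤ t₁`,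
`y(t₀) = 0`, `y ≥ 0` on `[t₀, s]` and `y ≤ 0` on `[s, t₁]`, then
`√(1 + x(t₁)² + y(t₁)²) ≤ (ω/(ω − ε_max))·√(1 + x(t₀)²)`,
a bound independent of the elapsed time `t₁ − t₀`. -/
theorem single_winding_growth_bound_subcritical
    (ω : ℝ) (hω : 0 < ω) (ε x y : ℝ → ℝ) (hε : Continuous ε)
    (εmax : ℝ) (hεmax : εmax < ω) (hbd : ∀ t, 0 ≤ ε t ∧ ε t ≤ εmax)
    (hx : ∀ t, HasDerivAt x (-(2 * ω - ε t) * y t) t)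
    (hy : ∀ t, HasDerivAt y ((2 * ω - ε t) * x t
      + ε t * Real.sqrt (1 + (x t) ^ 2 + (y t) ^ 2)) t)
    (t₀ s t₁ : ℝ) (h₀s : t₀ ≤ s) (hs₁ : s ≤ t₁) (hy0 : y t₀ = 0)
    (hupper : ∀ t ∈ Set.Icc t₀ s, 0 ≤ y t)
    (hlower : ∀ t ∈ Set.Icc s t₁, y t ≤ 0) :
    Real.sqrt (1 + (x t₁) ^ 2 + (y t₁) ^ 2)
      ≤ (ω / (ω - εmax)) * Real.sqrt (1 + (x t₀) ^ 2) := by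
  have trajectory : IsSqueezingTrajectoryOn ω ε x y (Set.Icc t₀ t₁) :=
    ⟨fun t _ => (hx t).hasDerivWithinAt, fun t _ => (hy t).hasDerivWithinAt⟩
  simpa [coshSqueezing, hy0] using
    single_winding_growth_bound_subcritical_general ((hbd s).1.trans (hbd s).2) hεmax trajectory
      h₀s hs₁ (fun t _ => (hbd t).2) (fun t _ => (hbd t).1) hupper hlower
end

section
/- (Value of the optimal on–off protocol at the critical point.) Let ω > 0, n ∈ ℕ, φ₀ ∈ (0, π) and φ̃ ∈ [0, π). Define f : [0, 2πn + φ̃] → ℝ by f(φ) = 1/(2ω·cos²(φ/2)) if either (φ − 2π⌊φ/(2π)⌋ < φ₀ and φ < 2πn) or φ ≥ 2πn, and f(φ) = 1/(2ω) otherwise. Then: (i) ∫₀^{2πn+φ̃} (2ω·f(φ) − 1)·(cot(φ/2)/2) dφ = −n·ln(cos(φ₀/2)) − ln(cos(φ̃/2)); and (ii) ∫₀^{2πn+φ̃} f(φ) dφ = (n/ω)·(tan(φ₀/2) + π − φ₀/2) + (1/ω)·tan(φ̃/2). -/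
open Real intervalIntegral

/-!
On each of the first `n` windings the protocol repeats the same pattern, so both integrals are `n`
times an integral over one period plus the integral over the final arc. On the "on" arcs
`(1 / cos² y - 1) cot y = tan y`, so the integrand of (i) is the logarithmic derivative of
`1 / cos (φ / 2)` and that of (ii) is `1 / ω` times the derivative of `tan (φ / 2)`; on the "off"
arcs the integrand of (i) vanishes and that of (ii) is constant.
-/

open Set MeasureTheory

section OnOff

variable {E : Type*} {T a t : ℝ} {n : ℕ} {u v : ℝ → E}

/-- The function that, on each period `[kT, (k + 1)T)`, follows `u` until the phase `φ - kT`
reaches `a` and follows `v` afterwards. -/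
noncomputable def cyclicSwitch (T a : ℝ) (u v : ℝ → E) (φ : ℝ) : E :=
  if φ - T * ⌊φ / T⌋ < a then u φ else v φ

/-- The on–off protocol: `n` full periods switching from `u` ("on") to `v` ("off") at phase `a`,
followed by `u` alone. -/
noncomputable def onOff (T a : ℝ) (n : ℕ) (u v : ℝ → E) (φ : ℝ) : E :=
  if φ < T * n then cyclicSwitch T a u v φ else u φ

theorem onOff_eq_ite (φ : ℝ) :
    onOff T a n u v φ =
      if (φ - T * ⌊φ / T⌋ < a ∧ φ < T * n) ∨ T * n ≤ φ then u φ else v φ := by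
  unfold onOff cyclicSwitch
  grind

theorem apply_onOff {F : Type*} (g : ℝ → E → F) (φ : ℝ) :
    g φ (onOff T a n u v φ) = onOff T a n (fun x => g x (u x)) (fun x => g x (v x)) φ := by
  unfold onOff cyclicSwitch
  split_ifs <;> rfl

theorem periodic_cyclicSwitch (hT : T ≠ 0) (hu : u.Periodic T) (hv : v.Periodic T) :
    (cyclicSwitch T a u v).Periodic T := by
  intro φ
  have h_phase : φ + T - T * ⌊(φ + T) / T⌋ = φ - T * ⌊φ / T⌋ := by
    rw [add_div, div_self hT, Int.floor_add_one]
    push_cast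
    ring
  simp only [cyclicSwitch, h_phase, hu φ, hv φ]

theorem cyclicSwitch_of_mem_Ico {φ : ℝ} (hφ : φ ∈ Ico 0 T) :
    cyclicSwitch T a u v φ = if φ < a then u φ else v φ := by
  have h_floor : ⌊φ / T⌋ = 0 :=
    Int.floor_eq_zero_iff.2 ⟨div_nonneg hφ.1 (hφ.1.trans hφ.2.le),
      (div_lt_one (hφ.1.trans_lt hφ.2)).2 hφ.2⟩
  simp [cyclicSwitch, h_floor]

theorem eqOn_cyclicSwitch_on (ha₀ : 0 ≤ a) (haT : a ≤ T) :
    EqOn (cyclicSwitch T a u v) u (uIoo 0 a) := by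
  rw [uIoo_of_le ha₀]
  intro φ hφ
  rw [cyclicSwitch_of_mem_Ico ⟨hφ.1.le, hφ.2.trans_le haT⟩, if_pos hφ.2]

theorem eqOn_cyclicSwitch_off (ha₀ : 0 ≤ a) (haT : a ≤ T) :
    EqOn (cyclicSwitch T a u v) v (uIoo a T) := by
  rw [uIoo_of_le haT]
  intro φ hφ
  rw [cyclicSwitch_of_mem_Ico ⟨ha₀.trans hφ.1.le, hφ.2⟩, if_neg hφ.1.not_gt]

variable [NormedAddCommGroup E]

theorem intervalIntegrable_cyclicSwitch (ha₀ : 0 ≤ a) (haT : a ≤ T)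
    (hui : IntervalIntegrable u volume 0 a) (hvi : IntervalIntegrable v volume a T) :
    IntervalIntegrable (cyclicSwitch T a u v) volume 0 T :=
  (hui.congr_uIoo (eqOn_cyclicSwitch_on ha₀ haT).symm).trans
    (hvi.congr_uIoo (eqOn_cyclicSwitch_off ha₀ haT).symm)

variable [NormedSpace ℝ E]

theorem integral_cyclicSwitch (ha₀ : 0 ≤ a) (haT : a ≤ T)
    (hui : IntervalIntegrable u volume 0 a) (hvi : IntervalIntegrable v volume a T) :
    ∫ φ in 0..T, cyclicSwitch T a u v φ = (∫ φ in 0..a, u φ) + ∫ φ in a..T, v φ := by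
  have h_on := eqOn_cyclicSwitch_on (u := u) (v := v) ha₀ haT
  have h_off := eqOn_cyclicSwitch_off (u := u) (v := v) ha₀ haT
  rw [← integral_add_adjacent_intervals (hui.congr_uIoo h_on.symm) (hvi.congr_uIoo h_off.symm),
    integral_congr_uIoo h_on, integral_congr_uIoo h_off]

theorem integral_onOff (hT : 0 < T) (ha₀ : 0 ≤ a) (haT : a ≤ T) (ht : 0 ≤ t)
    (hu : u.Periodic T) (hv : v.Periodic T) (hui : IntervalIntegrable u volume 0 a)
    (hvi : IntervalIntegrable v volume a T) (hut : IntervalIntegrable u volume 0 t) :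
    ∫ φ in 0..T * n + t, onOff T a n u v φ =
      n • ((∫ φ in 0..a, u φ) + ∫ φ in a..T, v φ) + ∫ φ in 0..t, u φ := by
  have hnT : 0 ≤ T * n := by positivity
  have h_period : u.Periodic (T * n) := by simpa only [mul_comm] using hu.nat_mul n
  have h_cycles : EqOn (onOff T a n u v) (cyclicSwitch T a u v) (uIoo 0 (T * n)) := by
    rw [uIoo_of_le hnT]
    exact fun φ hφ => if_pos hφ.2
  have h_tail : EqOn (onOff T a n u v) u (uIoo (T * n) (T * n + t)) := by
    rw [uIoo_of_le (by linarith)]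
    exact fun φ hφ => if_neg hφ.1.not_gt
  have h_switch := periodic_cyclicSwitch (a := a) hT.ne' hu hv
  have h_int := h_switch.intervalIntegrable₀ hT.ne'
    (intervalIntegrable_cyclicSwitch ha₀ haT hui hvi)
  have h_int_tail : IntervalIntegrable u volume (T * n) (T * n + t) := by
    simpa [h_period.sub_eq, add_comm] using hut.comp_sub_right (T * n)
  rw [← integral_add_adjacent_intervals ((h_int 0 (T * n)).congr_uIoo h_cycles.symm)
    (h_int_tail.congr_uIoo h_tail.symm), integral_congr_uIoo h_cycles, integral_congr_uIoo h_tail]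
  congr 1
  · have h_periods := h_switch.intervalIntegral_add_zsmul_eq n 0 h_int
    simp only [zero_add, natCast_zsmul, nsmul_eq_mul] at h_periods
    rw [mul_comm, h_periods, integral_cyclicSwitch ha₀ haT hui hvi]
  · simpa [h_period _, add_comm] using
      (integral_comp_add_right (a := 0) (b := t) u (T * n)).symm

end OnOff

section Trigonometry

variable {a b : ℝ}

-- Where `cos y = 0`, both `1 / cos y ^ 2` and `tan y` take the junk value `0`.
theorem one_div_cos_sq_sub_one_mul_cot (y : ℝ) : (1 / cos y ^ 2 - 1) * cot y = tan y := by
  rw [cot_eq_cos_div_sin, tan_eq_sin_div_cos]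
  rcases eq_or_ne (sin y) 0 with hs | hs
  · simp [hs]
  rcases eq_or_ne (cos y) 0 with hc | hc
  · simp [hc]
  · field_simp
    linarith [sin_sq_add_cos_sq y]

theorem intervalIntegrable_one_div_cos_sq (h : ∀ x ∈ uIcc a b, cos x ≠ 0) :
    IntervalIntegrable (fun x => 1 / cos x ^ 2) volume a b :=
  ContinuousOn.intervalIntegrable <|
    continuousOn_const.div (by fun_prop) fun x hx => pow_ne_zero 2 (h x hx)

theorem integral_one_div_cos_sq (h : ∀ x ∈ uIcc a b, cos x ≠ 0) :
    ∫ x in a..b, 1 / cos x ^ 2 = tan b - tan a :=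
  integral_eq_sub_of_hasDerivAt (fun x hx => hasDerivAt_tan (h x hx))
    (intervalIntegrable_one_div_cos_sq h)

theorem intervalIntegrable_tan (h : ∀ x ∈ uIcc a b, cos x ≠ 0) :
    IntervalIntegrable tan volume a b :=
  (continuousOn_tan.mono h).intervalIntegrable

theorem integral_tan (h : ∀ x ∈ uIcc a b, cos x ≠ 0) :
    ∫ x in a..b, tan x = log (cos a) - log (cos b) := by
  have h_deriv (x : ℝ) (hx : x ∈ uIcc a b) : HasDerivAt (fun y => -log (cos y)) (tan x) x :=
    ((hasDerivAt_cos x).log (h x hx)).neg.congr_deriv (by rw [tan_eq_sin_div_cos]; ring)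
  rw [integral_eq_sub_of_hasDerivAt h_deriv (intervalIntegrable_tan h)]
  ring

theorem cos_half_ne_zero {θ : ℝ} (hθ : |θ| < π) :
    ∀ x ∈ uIcc 0 (θ / 2), cos x ≠ 0 := by
  intro x hx
  have hx_le : |x| ≤ |θ| / 2 := by simpa [abs_div] using abs_sub_left_of_mem_uIcc hx
  exact (cos_pos_of_mem_Ioo (abs_lt.1 (by linarith))).ne'

theorem periodic_tan_half : Function.Periodic (fun φ => tan (φ / 2) / 2) (2 * π) := by
  intro φ
  simp only [add_div, mul_div_cancel_left₀ π two_ne_zero, tan_periodic (φ / 2)]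

theorem intervalIntegrable_tan_half {θ : ℝ} (hθ : |θ| < π) :
    IntervalIntegrable (fun φ => tan (φ / 2) / 2) volume 0 θ := by
  have h_tan := (intervalIntegrable_tan (cos_half_ne_zero hθ)).comp_mul_left (c := 2⁻¹)
  simpa [← div_eq_inv_mul] using h_tan.div_const 2

theorem integral_tan_half {θ : ℝ} (hθ : |θ| < π) :
    ∫ φ in 0..θ, tan (φ / 2) / 2 = -log (cos (θ / 2)) := by
  rw [intervalIntegral.integral_div, integral_comp_div _ two_ne_zero, zero_div,
    integral_tan (cos_half_ne_zero hθ), cos_zero, log_one, smul_eq_mul]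
  ring

end Trigonometry

section OnRate

variable {ω θ : ℝ}

/-- The rate `∂t/∂φ` while the control is switched on (`ε = ω`). -/
noncomputable def onRate (ω φ : ℝ) : ℝ :=
  1 / (2 * ω * cos (φ / 2) ^ 2)

theorem onRate_eq_mul (ω φ : ℝ) : onRate ω φ = 1 / (2 * ω) * (1 / cos (φ / 2) ^ 2) := by
  rw [onRate, one_div_mul_one_div]

theorem periodic_onRate (ω : ℝ) : (onRate ω).Periodic (2 * π) := by
  intro φ
  simp only [onRate, add_div, mul_div_cancel_left₀ π two_ne_zero, cos_add_pi, neg_sq]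

theorem intervalIntegrable_onRate (ω : ℝ) (hθ : |θ| < π) :
    IntervalIntegrable (onRate ω) volume 0 θ := by
  have h_sec := (intervalIntegrable_one_div_cos_sq (cos_half_ne_zero hθ)).comp_mul_left (c := 2⁻¹)
  simpa [← div_eq_inv_mul, funext (onRate_eq_mul ω)] using h_sec.const_mul (1 / (2 * ω))

theorem integral_onRate (ω : ℝ) (hθ : |θ| < π) :
    ∫ φ in 0..θ, onRate ω φ = 1 / ω * tan (θ / 2) := by
  simp only [onRate_eq_mul]
  rw [intervalIntegral.integral_const_mul,
    integral_comp_div (fun x => 1 / cos x ^ 2) two_ne_zero, zero_div,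
    integral_one_div_cos_sq (cos_half_ne_zero hθ), tan_zero, smul_eq_mul]
  ring

theorem two_mul_onRate_sub_one_mul_cot (hω : ω ≠ 0) (φ : ℝ) :
    (2 * ω * onRate ω φ - 1) * (cot (φ / 2) / 2) = tan (φ / 2) / 2 := by
  have h_scale : 2 * ω * onRate ω φ = 1 / cos (φ / 2) ^ 2 := by
    rw [onRate_eq_mul]
    field_simp
  rw [h_scale, ← mul_div_assoc, one_div_cos_sq_sub_one_mul_cot]

theorem two_mul_onOff_sub_one_mul_cot {T a : ℝ} {n : ℕ} (hω : ω ≠ 0) (φ : ℝ) :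
    (2 * ω * onOff T a n (onRate ω) (fun _ => 1 / (2 * ω)) φ - 1) * (cot (φ / 2) / 2) =
      onOff T a n (fun x => tan (x / 2) / 2) (fun _ => 0) φ := by
  have h_off : 2 * ω * (1 / (2 * ω)) - 1 = 0 := by field_simp; norm_num
  rw [apply_onOff fun x r => (2 * ω * r - 1) * (cot (x / 2) / 2)]
  simp only [two_mul_onRate_sub_one_mul_cot hω, h_off, zero_mul]

end OnRate

/-- value of the optimal on–off protocol at the critical point: with
`f(φ) = 1/(2ω·cos²(φ/2))` on the "on" segments (fractional phase `< φ₀` within the first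
`n` windings, or past `2πn`) and `f(φ) = 1/(2ω)` on the "off" segments, one has
(i) `∫₀^{2πn+φ̃} (2ω·f − 1)·cot(φ/2)/2 dφ = −n·ln cos(φ₀/2) − ln cos(φ̃/2)` and
(ii) `∫₀^{2πn+φ̃} f dφ = (n/ω)(tan(φ₀/2) + π − φ₀/2) + (1/ω)·tan(φ̃/2)`. -/
theorem on_off_protocol_value
    (ω : ℝ) (hω : 0 < ω) (n : ℕ) (φ₀ : ℝ) (hφ₀ : φ₀ ∈ Set.Ioo 0 π)
    (φt : ℝ) (hφt : φt ∈ Set.Ico 0 π)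
    (f : ℝ → ℝ)
    (hf : ∀ φ, f φ =
      if (φ - 2 * π * ⌊φ / (2 * π)⌋ < φ₀ ∧ φ < 2 * π * n) ∨ 2 * π * n ≤ φ
      then 1 / (2 * ω * Real.cos (φ / 2) ^ 2) else 1 / (2 * ω)) :
    (∫ φ in (0:ℝ)..(2 * π * n + φt),
        (2 * ω * f φ - 1) * (Real.cot (φ / 2) / 2)
      = -(n : ℝ) * Real.log (Real.cos (φ₀ / 2)) - Real.log (Real.cos (φt / 2)))
    ∧ (∫ φ in (0:ℝ)..(2 * π * n + φt), f φ
      = (n / ω) * (Real.tan (φ₀ / 2) + π - φ₀ / 2) + (1 / ω) * Real.tan (φt / 2)) := by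
  have hφ₀_abs : |φ₀| < π := by rw [abs_of_pos hφ₀.1]; exact hφ₀.2
  have hφt_abs : |φt| < π := by rw [abs_of_nonneg hφt.1]; exact hφt.2
  have hφ₀_le : φ₀ ≤ 2 * π := by linarith [hφ₀.2, pi_pos]
  obtain rfl : f = onOff (2 * π) φ₀ n (onRate ω) (fun _ => 1 / (2 * ω)) :=
    funext fun φ => by rw [hf, onOff_eq_ite, onRate]
  constructor
  · simp only [two_mul_onOff_sub_one_mul_cot hω.ne']
    rw [integral_onOff two_pi_pos hφ₀.1.le hφ₀_le hφt.1 periodic_tan_half (fun _ => rfl)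
      (intervalIntegrable_tan_half hφ₀_abs) intervalIntegrable_const
      (intervalIntegrable_tan_half hφt_abs), integral_tan_half hφ₀_abs, integral_tan_half hφt_abs,
      intervalIntegral.integral_zero, nsmul_eq_mul]
    ring
  · rw [integral_onOff two_pi_pos hφ₀.1.le hφ₀_le hφt.1 (periodic_onRate ω) (fun _ => rfl)
      (intervalIntegrable_onRate ω hφ₀_abs) intervalIntegrable_const
      (intervalIntegrable_onRate ω hφt_abs), integral_onRate ω hφ₀_abs, integral_onRate ω hφt_abs,
      intervalIntegral.integral_const, smul_eq_mul, nsmul_eq_mul]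
    ring
end

section
/- Define g : (0, π) → ℝ by g(x) = −ln(cos(x/2)) / (tan(x/2) + π − x/2). Then g is differentiable on (0, π), and at any critical point x ∈ (0, π) (i.e., any x with g'(x) = 0) one has g(x) = cot(x/2). -/
open Real

/-! With `y = x / 2`, the numerator `-log (cos y)` of `g` has `y`-derivative `tan y`, and the
denominator has `y`-derivative `(1 + tan y ^ 2) - 1 = tan y ^ 2`. At a critical point a quotient
equals the quotient of the derivatives of its terms, here `tan y / tan y ^ 2 = cot y`. -/

theorem div_eq_div_of_deriv_div_eq_zero {𝕜 𝕜' : Type*} [NontriviallyNormedField 𝕜]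
    [NontriviallyNormedField 𝕜'] [NormedAlgebra 𝕜 𝕜'] {f g : 𝕜 → 𝕜'} {f' g' : 𝕜'} {x : 𝕜}
    (hf : HasDerivAt f f' x) (hg : HasDerivAt g g' x) (hgx : g x ≠ 0) (hg' : g' ≠ 0)
    (hcrit : deriv (fun t => f t / g t) x = 0) : f x / g x = f' / g' := by
  rw [(hf.fun_div hg hgx).deriv, div_eq_zero_iff,
    or_iff_left (pow_ne_zero 2 hgx), sub_eq_zero] at hcrit
  rw [div_eq_div_iff hgx hg', hcrit]

theorem hasDerivAt_neg_log_cos {y : ℝ} (hy : cos y ≠ 0) :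
    HasDerivAt (fun t => -log (cos t)) (tan y) y := by
  simpa only [tan_eq_sin_div_cos, neg_div, neg_neg] using ((hasDerivAt_cos y).log hy).fun_neg

theorem hasDerivAt_tan_add_const_sub_id {y : ℝ} (c : ℝ) (hy : cos y ≠ 0) :
    HasDerivAt (fun t => tan t + c - t) (tan y ^ 2) y := by
  have hderiv : 1 / cos y ^ 2 - 1 = tan y ^ 2 := by
    rw [← inv_one_add_tan_sq hy, one_div, inv_inv, add_sub_cancel_left]
  simpa only [hderiv] using ((hasDerivAt_tan hy).add_const c).fun_sub (hasDerivAt_id' y)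

theorem cos_half_pos {x : ℝ} (hx : x ∈ Set.Ioo (-π) π) : 0 < cos (x / 2) :=
  cos_pos_of_mem_Ioo ⟨by linarith [hx.1], by linarith [hx.2]⟩

theorem tan_half_pos {x : ℝ} (hx : x ∈ Set.Ioo 0 π) : 0 < tan (x / 2) :=
  tan_pos_of_pos_of_lt_pi_div_two (half_pos hx.1) (by linarith [hx.2])

theorem tan_half_add_pi_sub_half_pos {x : ℝ} (hx : x ∈ Set.Ioo 0 π) :
    0 < tan (x / 2) + π - x / 2 := by
  linarith [tan_half_pos hx, hx.1, hx.2]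

theorem squeezing_rate_critical_point_identity_general {c x : ℝ} (hcos : 0 < cos (x / 2))
    (hden : tan (x / 2) + c - x / 2 ≠ 0) :
    DifferentiableAt ℝ (fun t => -log (cos (t / 2)) / (tan (t / 2) + c - t / 2)) x ∧
      (tan (x / 2) ≠ 0 →
        deriv (fun t => -log (cos (t / 2)) / (tan (t / 2) + c - t / 2)) x = 0 →
        -log (cos (x / 2)) / (tan (x / 2) + c - x / 2) = cot (x / 2)) := by
  have hhalf : HasDerivAt (fun t : ℝ => t / 2) (1 / 2) x := (hasDerivAt_id' x).div_const 2
  have hnum : HasDerivAt (fun t => -log (cos (t / 2))) (tan (x / 2) * (1 / 2)) x :=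
    HasDerivAt.comp (h := (· / 2)) x (hasDerivAt_neg_log_cos hcos.ne') hhalf
  have hden' : HasDerivAt (fun t => tan (t / 2) + c - t / 2) (tan (x / 2) ^ 2 * (1 / 2)) x :=
    HasDerivAt.comp (h := (· / 2)) x (hasDerivAt_tan_add_const_sub_id c hcos.ne') hhalf
  refine ⟨(hnum.fun_div hden' hden).differentiableAt, fun htan hcrit => ?_⟩
  calc -log (cos (x / 2)) / (tan (x / 2) + c - x / 2)
      = tan (x / 2) * (1 / 2) / (tan (x / 2) ^ 2 * (1 / 2)) :=
        div_eq_div_of_deriv_div_eq_zero hnum hden' hden (by positivity) hcrit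
    _ = (tan (x / 2))⁻¹ := by field_simp
    _ = cot (x / 2) := tan_inv_eq_cot _

/-- the squeezing-rate function
`g(x) = −ln(cos(x/2)) / (tan(x/2) + π − x/2)` is differentiable on `(0, π)`, and at any
critical point `x ∈ (0, π)` (i.e. `g'(x) = 0`) one has `g(x) = cot(x/2)`. -/
theorem squeezing_rate_critical_point_identity :
    (∀ x ∈ Set.Ioo (0:ℝ) π,
      DifferentiableAt ℝ
        (fun x : ℝ => -Real.log (Real.cos (x / 2)) / (Real.tan (x / 2) + π - x / 2)) x)
    ∧ (∀ x ∈ Set.Ioo (0:ℝ) π,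
        deriv
          (fun x : ℝ => -Real.log (Real.cos (x / 2)) / (Real.tan (x / 2) + π - x / 2))
          x = 0 →
        -Real.log (Real.cos (x / 2)) / (Real.tan (x / 2) + π - x / 2)
          = Real.cot (x / 2)) := by
  have hgeneral (x : ℝ) (hx : x ∈ Set.Ioo 0 π) := squeezing_rate_critical_point_identity_general
    (cos_half_pos ⟨by linarith [hx.1, pi_pos], hx.2⟩) (tan_half_add_pi_sub_half_pos hx).ne'
  exact ⟨fun x hx => (hgeneral x hx).1, fun x hx => (hgeneral x hx).2 (tan_half_pos hx).ne'⟩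
end

section
/- Define g : (0, π) → ℝ by g(x) = −ln(cos(x/2)) / (tan(x/2) + π − x/2). Then g attains a maximum on (0, π): there exists x* ∈ (0, π) such that g(x) ≤ g(x*) for all x ∈ (0, π), and moreover 0.24 < g(x*) < 0.25. -/
open Real

/-!
In terms of `y = tan (x / 2)`, the squeezing `N y = log (1 + y ^ 2) / 2` and the duration
`D y = y + π - arctan y` of a period satisfy `y * N' y = D' y`. Hence, for every `a > 0`, the
difference `a * N - D` has derivative `y * (a - y) / (1 + y ^ 2)` and is maximal on `(0, ∞)` exactly
at `y = a`. If `a * N a = D a`, this maximum is zero, so `N / D` is bounded by `1 / a`, with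
equality at `a`. The intermediate value theorem locates such an `a` between `4 = 1 / 0.25` and
`25 / 6 = 1 / 0.24`.
-/

lemma arctan_lt_self {x : ℝ} (hx : 0 < x) : arctan x < x := by
  simpa only [tan_arctan] using lt_tan (arctan_pos.2 hx) (arctan_lt_pi_div_two x)

lemma div_sqrt_one_add_sq_lt_arctan {x : ℝ} (hx : 0 < x) : x / √(1 + x ^ 2) < arctan x :=
  sin_arctan x ▸ sin_lt (arctan_pos.2 hx)

lemma log_one_add_tan_sq {t : ℝ} (ht : cos t ≠ 0) : log (1 + tan t ^ 2) = -2 * log (cos t) := by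
  rw [← inv_inv (1 + tan t ^ 2), inv_one_add_tan_sq ht, log_inv, log_pow]
  push_cast
  ring

/-- The squeezing `-log (cos (x / 2))` produced in one winding period by the switching angle `x`,
as a function of `y = tan (x / 2)`, in which it is smooth on the whole real line. -/
noncomputable def periodSqueezing (y : ℝ) : ℝ := log (1 + y ^ 2) / 2

/-- The duration `tan (x / 2) + π - x / 2` of one winding period with switching angle `x`,
in units of `1 / ω` and as a function of `y = tan (x / 2)`. -/
noncomputable def periodDuration (y : ℝ) : ℝ := y + π - arctan y

/-- The squeezing per unit time (in units of `ω`) of the on–off protocol with switching angle `x`,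
as a function of `y = tan (x / 2)`. -/
noncomputable def squeezingRate (y : ℝ) : ℝ := periodSqueezing y / periodDuration y

lemma squeezingRate_tan {t : ℝ} (ht : t ∈ Set.Ioo (-(π / 2)) (π / 2)) :
    squeezingRate (tan t) = -log (cos t) / (tan t + π - t) := by
  rw [squeezingRate, periodSqueezing, periodDuration, arctan_tan ht.1 ht.2,
    log_one_add_tan_sq (cos_pos_of_mem_Ioo ht).ne']
  ring

lemma periodDuration_pos {y : ℝ} (hy : 0 ≤ y) : 0 < periodDuration y := by
  rw [periodDuration]
  linarith [arctan_lt_pi_div_two y, pi_pos]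

lemma hasDerivAt_periodSqueezing (y : ℝ) : HasDerivAt periodSqueezing (y / (1 + y ^ 2)) y := by
  have hsq : HasDerivAt (fun z : ℝ ↦ 1 + z ^ 2) (2 * y) y := by
    simpa using (hasDerivAt_pow 2 y).const_add 1
  exact ((hsq.log (by positivity)).div_const 2).congr_deriv (by field_simp)

lemma hasDerivAt_periodDuration (y : ℝ) : HasDerivAt periodDuration (y ^ 2 / (1 + y ^ 2)) y :=
  (((hasDerivAt_id y).add_const π).sub (hasDerivAt_arctan y)).congr_deriv (by field_simp; ring)

lemma isMaxOn_mul_periodSqueezing_sub_periodDuration {a : ℝ} (ha : 0 < a) :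
    IsMaxOn (fun y ↦ a * periodSqueezing y - periodDuration y) (Set.Ioi 0) a := by
  have hderiv (y : ℝ) : HasDerivAt (fun z ↦ a * periodSqueezing z - periodDuration z)
      (y * (a - y) / (1 + y ^ 2)) y :=
    (((hasDerivAt_periodSqueezing y).const_mul a).sub (hasDerivAt_periodDuration y)).congr_deriv
      (by ring)
  have hdiff : Differentiable ℝ fun y ↦ a * periodSqueezing y - periodDuration y :=
    fun y ↦ (hderiv y).differentiableAt
  refine isMaxOn_Ioi_of_deriv hdiff.continuous.continuousAt
    hdiff.differentiableOn hdiff.differentiableOn (fun y hy ↦ ?_) (fun y hy ↦ ?_)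
  · rw [(hderiv y).deriv]
    exact div_nonneg (mul_nonneg hy.1.le (sub_nonneg.2 hy.2.le)) (by positivity)
  · rw [(hderiv y).deriv]
    exact div_nonpos_of_nonpos_of_nonneg
      (mul_nonpos_of_nonneg_of_nonpos (ha.trans hy).le (sub_nonpos.2 hy.le)) (by positivity)

lemma squeezingRate_eq_inv_iff {a : ℝ} (ha : 0 < a) :
    squeezingRate a = a⁻¹ ↔ a * periodSqueezing a = periodDuration a := by
  rw [squeezingRate, div_eq_iff (periodDuration_pos ha.le).ne', eq_inv_mul_iff_mul_eq₀ ha.ne']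

lemma isMaxOn_squeezingRate {a : ℝ} (ha : 0 < a) (hrate : squeezingRate a = a⁻¹) :
    IsMaxOn squeezingRate (Set.Ioi 0) a := by
  intro y (hy : 0 < y)
  have hmax : a * periodSqueezing y - periodDuration y ≤ a * periodSqueezing a - periodDuration a :=
    isMaxOn_mul_periodSqueezing_sub_periodDuration ha hy
  rw [(squeezingRate_eq_inv_iff ha).1 hrate, sub_self, sub_nonpos] at hmax
  change squeezingRate y ≤ squeezingRate a
  rwa [hrate, squeezingRate, div_le_iff₀ (periodDuration_pos hy.le), le_inv_mul_iff₀ ha]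

lemma four_mul_periodSqueezing_lt : 4 * periodSqueezing 4 < periodDuration 4 := by
  have hlog : log (1 + 4 ^ 2) ≤ 4 * log 2 + 1 / 16 := by
    rw [show (1 + 4 ^ 2 : ℝ) = 2 ^ 4 * (17 / 16) by norm_num,
      log_mul (by norm_num) (by norm_num), log_pow]
    norm_num
    linarith [log_le_sub_one_of_pos (x := 17 / 16) (by norm_num)]
  have harctan : arctan 4 < π / 2 - 1 / 5 := by
    have hsqrt : √(1 + (4 : ℝ)⁻¹ ^ 2) ≤ 5 / 4 := sqrt_le_iff.2 (by norm_num)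
    have hinv : (1 / 5 : ℝ) < arctan 4⁻¹ :=
      calc (1 / 5 : ℝ) = 4⁻¹ / (5 / 4) := by norm_num
        _ ≤ 4⁻¹ / √(1 + (4 : ℝ)⁻¹ ^ 2) := by gcongr
        _ < arctan 4⁻¹ := div_sqrt_one_add_sq_lt_arctan (by norm_num)
    rw [arctan_inv_of_pos (by norm_num)] at hinv
    linarith
  rw [periodSqueezing, periodDuration]
  linarith [log_two_lt_d9, pi_gt_d4]

lemma periodDuration_lt_mul_periodSqueezing :
    periodDuration (25 / 6) < 25 / 6 * periodSqueezing (25 / 6) := by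
  have hlog : 4 * log 2 + 85 / 661 ≤ log (1 + (25 / 6) ^ 2) := by
    rw [show (1 + (25 / 6) ^ 2 : ℝ) = 2 ^ 4 * (661 / 576) by norm_num,
      log_mul (by norm_num) (by norm_num), log_pow]
    norm_num
    linarith [one_sub_inv_le_log_of_pos (x := 661 / 576) (by norm_num)]
  have harctan : π / 2 - 6 / 25 < arctan (25 / 6) := by
    have hinv : arctan (25 / 6)⁻¹ < (25 / 6)⁻¹ := arctan_lt_self (by norm_num)
    rw [arctan_inv_of_pos (by norm_num)] at hinv
    linarith
  rw [periodSqueezing, periodDuration]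
  linarith [log_two_gt_d9, pi_lt_d4]

lemma exists_squeezingRate_eq_inv :
    ∃ a ∈ Set.Ioo (4 : ℝ) (25 / 6), squeezingRate a = a⁻¹ := by
  have hcont : Continuous fun y ↦ y * periodSqueezing y - periodDuration y :=
    continuous_iff_continuousAt.2 fun y ↦ (continuousAt_id.mul
      (hasDerivAt_periodSqueezing y).continuousAt).sub (hasDerivAt_periodDuration y).continuousAt
  obtain ⟨a, ha, hzero⟩ := intermediate_value_Ioo (by norm_num) hcont.continuousOn
    ⟨sub_neg.2 four_mul_periodSqueezing_lt, sub_pos.2 periodDuration_lt_mul_periodSqueezing⟩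
  have ha0 : 0 < a := by linarith [ha.1]
  exact ⟨a, ha, (squeezingRate_eq_inv_iff ha0).2 (sub_eq_zero.1 hzero)⟩

/-- the squeezing-rate function
`g(x) = −ln(cos(x/2)) / (tan(x/2) + π − x/2)` attains a maximum on `(0, π)`, and the
maximal value lies strictly between `0.24` and `0.25` (it is `Γ/4 ≈ 0.2436`). -/
theorem squeezing_rate_max :
    ∃ xstar ∈ Set.Ioo (0:ℝ) π,
      (∀ x ∈ Set.Ioo (0:ℝ) π,
        -Real.log (Real.cos (x / 2)) / (Real.tan (x / 2) + π - x / 2)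
          ≤ -Real.log (Real.cos (xstar / 2)) / (Real.tan (xstar / 2) + π - xstar / 2))
      ∧ (0.24 : ℝ) <
          -Real.log (Real.cos (xstar / 2)) / (Real.tan (xstar / 2) + π - xstar / 2)
      ∧ -Real.log (Real.cos (xstar / 2)) / (Real.tan (xstar / 2) + π - xstar / 2)
          < (0.25 : ℝ) := by
  obtain ⟨a, ⟨ha4, ha25⟩, hrate⟩ := exists_squeezingRate_eq_inv
  have ha : 0 < a := by linarith
  refine ⟨2 * arctan a, ⟨by linarith [arctan_pos.2 ha], by linarith [arctan_lt_pi_div_two a]⟩, ?_⟩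
  rw [mul_div_cancel_left₀ _ two_ne_zero, ← squeezingRate_tan (arctan_mem_Ioo a), tan_arctan]
  refine ⟨fun x hx ↦ ?_, ?_, ?_⟩
  · rw [← squeezingRate_tan ⟨by linarith [hx.1, pi_pos], by linarith [hx.2]⟩]
    exact isMaxOn_squeezingRate ha hrate
      (tan_pos_of_pos_of_lt_pi_div_two (by linarith [hx.1]) (by linarith [hx.2]))
  · rw [hrate, lt_inv_comm₀ (by norm_num) ha]
    exact ha25.trans_eq (by norm_num)
  · rw [hrate, inv_lt_comm₀ ha (by norm_num)]
    exact lt_of_eq_of_lt (by norm_num) ha4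
end
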